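/- For every integer ℓ ≥ 2 and every real x > 0, as n → ∞ the variance of the number of joint orbits satisfies Var(K_{ℓ,n}) ~ ((x·K_ℓ)^{1/ℓ}/(ℓ(ℓ−1))) · n^{(ℓ−1)/ℓ}, i.e. the ratio of the two sides tends to 1. -/

import Mathlib

open Filter Topology Real MeasureTheory Asymptotics

noncomputable section

/-- Number of joint orbits of the subgroup generated by a tuple of permutations. -/
def kappa {ℓ n : ℕ} (σ : Fin ℓ → Equiv.Perm (Fin n)) : ℕ :=
  Nat.card (MulAction.orbitRel.Quotient (Subgroup.closure (Set.range σ)) (Fin n))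

/-- `Acount ℓ n k` is the number of commuting `ℓ`-tuples of permutations of `{1,…,n}`
with exactly `k` joint orbits. -/
def Acount (ℓ n k : ℕ) : ℕ :=
  Nat.card {σ : Fin ℓ → Equiv.Perm (Fin n) //
    (∀ i j, σ i * σ j = σ j * σ i) ∧ kappa σ = k}

/-- `Hpoly ℓ n x = (1/n!) ∑_k A(ℓ,n,k) x^k`. -/
def Hpoly (ℓ n : ℕ) (x : ℝ) : ℝ :=
  (1 / (n.factorial : ℝ)) * ∑ k ∈ Finset.range (n + 1), (Acount ℓ n k : ℝ) * x ^ k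

/-- Expectation, under the Ewens-like measure `P_{ℓ,n,x}`, of `g(K_{ℓ,n})`. -/
def expectK (ℓ n : ℕ) (x : ℝ) (g : ℕ → ℝ) : ℝ :=
  (∑ k ∈ Finset.range (n + 1), g k * (Acount ℓ n k : ℝ) * x ^ k) /
    (∑ k ∈ Finset.range (n + 1), (Acount ℓ n k : ℝ) * x ^ k)

/-- Mean of `K_{ℓ,n}` under `P_{ℓ,n,x}`. -/
def meanK (ℓ n : ℕ) (x : ℝ) : ℝ := expectK ℓ n x (fun k => (k : ℝ))

/-- Variance of `K_{ℓ,n}` under `P_{ℓ,n,x}`. -/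
def varK (ℓ n : ℕ) (x : ℝ) : ℝ :=
  expectK ℓ n x (fun k => ((k : ℝ) - meanK ℓ n x) ^ 2)

/-- Real Riemann zeta values (as a series), `zetaR s = ∑_{m ≥ 1} m^{-s}`. -/
def zetaR (s : ℝ) : ℝ := ∑' m : ℕ, 1 / ((m : ℝ) + 1) ^ s

/-- The constant `K_ℓ = (ℓ-1)! ζ(2)⋯ζ(ℓ)`. -/
def Kconst (ℓ : ℕ) : ℝ := ((ℓ - 1).factorial : ℝ) * ∏ j ∈ Finset.Icc 2 ℓ, zetaR (j : ℝ)

/-- The multiple series `Z^{[ℓ]}_{α_1,…,α_ℓ}(t)` with complex exponents. -/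
def Zc (ℓ : ℕ) (α : Fin ℓ → ℂ) (t : ℝ) : ℂ :=
  ∑' δ : Fin ℓ → ℕ+,
    (∏ i, ((δ i : ℕ) : ℂ) ^ (α i - 1)) *
      Complex.exp (-(((∏ i, ((δ i : ℕ) : ℝ)) * t : ℝ) : ℂ))

/-- The multiple series `Z^{[ℓ]}_{α_1,…,α_ℓ}(t)` with real exponents. -/
def Zr (ℓ : ℕ) (α : Fin ℓ → ℝ) (t : ℝ) : ℝ :=
  ∑' δ : Fin ℓ → ℕ+,
    (∏ i, ((δ i : ℕ) : ℝ) ^ (α i - 1)) *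
      Real.exp (-(∏ i, ((δ i : ℕ) : ℝ)) * t)

/-- The staircase series `Z_m^{[ℓ]}(t) = Z^{[ℓ]}_{m,m-1,…,m-ℓ+1}(t)`. -/
def Zstair (ℓ : ℕ) (m : ℤ) (t : ℝ) : ℝ :=
  Zr ℓ (fun i => (m : ℝ) - (i : ℕ)) t

/-- The inverse function `(Z_ℓ^{[ℓ]})^{-1} : (0,∞) → (0,∞)`. -/
def ZstairInv (ℓ : ℕ) (u : ℝ) : ℝ :=
  Function.invFunOn (Zstair ℓ ℓ) (Set.Ioi 0) u

/-- The function `q_{ℓ,n}(y,u,θ)` from the saddle point analysis. -/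
def qfun (ℓ n : ℕ) (y u θ : ℝ) : ℂ :=
  Complex.I * (n : ℂ) * (θ : ℂ) - (y : ℂ) * ∑' δ : Fin ℓ → ℕ+,
    (∏ i, ((δ i : ℕ) : ℂ) ^ ((ℓ : ℤ) - 2 - (i : ℕ))) *
      Complex.exp (-(((∏ i, ((δ i : ℕ) : ℝ)) * u : ℝ) : ℂ)) *
      (Complex.exp (Complex.I * (((∏ i, ((δ i : ℕ) : ℝ)) * θ : ℝ) : ℂ)) - 1)

/-- The normalizing sequence `b_n = ((x K_ℓ)^{1/(2ℓ)}/√(ℓ(ℓ-1))) n^{(ℓ-1)/(2ℓ)}`. -/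
def bseq (ℓ : ℕ) (x : ℝ) (n : ℕ) : ℝ :=
  (x * Kconst ℓ) ^ ((1 : ℝ) / (2 * (ℓ : ℝ))) / Real.sqrt ((ℓ : ℝ) * ((ℓ : ℝ) - 1)) *
    (n : ℝ) ^ (((ℓ : ℝ) - 1) / (2 * (ℓ : ℝ)))

/-- The sequence `x_n = x e^{s/b_n}`. -/
def xseq (ℓ : ℕ) (x s : ℝ) (n : ℕ) : ℝ := x * Real.exp (s / bseq ℓ x n)

/-- The saddle point sequence `t_n = (Z_ℓ^{[ℓ]})^{-1}(n/x)`. -/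
def tseq (ℓ : ℕ) (x : ℝ) (n : ℕ) : ℝ := ZstairInv ℓ ((n : ℝ) / x)

end

/-!
Commuting `ℓ`-tuples in `S_n` are actions of `ℤ^ℓ` on `n` points, and a transitive action with a
base point is determined up to relabelling by the stabilizer, a sublattice of index `n`. By the
exponential formula the generating function of `H_{ℓ,n}(x)` is `exp B(z)`, where `B(z) = ∑ b_n z^n`
and `b_n` is `x / n` times the number of sublattices of index `n`. Counting these recursively in `ℓ`
exhibits the number as the Dirichlet convolution of the count for `ℤ^(ℓ-1)` with `n ↦ n^(ℓ-1)`,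
which yields the behaviour of `∑ b_n n^j e^(-nt)` as `t → 0` for every `j`.

The factorial moments of the number of orbits are Cauchy integrals of `B^j exp B` over the circle of
radius `e^(-t)`, with `t` chosen at the saddle point `∑ k b_k e^(-kt) = n`. Replacing `B` by its
increment from the positive real axis removes the cancellation between the first two moments, at the
cost of a Poisson term `B(e^(-t))` in the variance. After rescaling the angle by `√(∑ k² b_k
e^(-kt))` and the centred series by `√(nt)`, dominated convergence turns the integrals into Gaussian
moments and gives `Var / (nt) → 1/(ℓ-1) - 1/ℓ = 1/(ℓ(ℓ-1))`, while `n t^ℓ → x K_ℓ`.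
-/

noncomputable section

/-! ### Counting actions by number of orbits -/

section OrbitCount

variable {G X Y Q : Type*} [Group G]

/-- The number of orbits on `X` of the action of `G` given by `φ`. -/
def orbitCount (φ : G →* Equiv.Perm X) : ℕ :=
  Nat.card (MulAction.orbitRel.Quotient φ.range X)

/-- The number of actions of `G` on `X` with exactly `k` orbits. -/
def homCount (G X : Type*) [Group G] (k : ℕ) : ℕ :=
  Nat.card {φ : G →* Equiv.Perm X // orbitCount φ = k}

theorem orbitRel_range_iff {φ : G →* Equiv.Perm X} {a b : X} :
    MulAction.orbitRel φ.range X a b ↔ ∃ g, φ g b = a := by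
  rw [MulAction.orbitRel_apply]
  constructor
  · rintro ⟨⟨_, g, rfl⟩, hg⟩
    exact ⟨g, hg⟩
  · rintro ⟨g, hg⟩
    exact ⟨⟨φ g, g, rfl⟩, hg⟩

theorem orbitCount_permCongrHom (e : X ≃ Y) (φ : G →* Equiv.Perm X) :
    orbitCount (e.permCongrHom.toMonoidHom.comp φ) = orbitCount φ := by
  refine (Nat.card_congr (Quotient.congr e fun a b => ?_)).symm
  simp [orbitRel_range_iff]

theorem homCount_congr (e : X ≃ Y) (k : ℕ) : homCount G X k = homCount G Y k :=
  Nat.card_congr ((e.permCongrHom.monoidHomCongrRightEquiv).subtypeEquiv fun φ => by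
    rw [← orbitCount_permCongrHom e φ]; rfl)

theorem homCount_zero_of_isEmpty [IsEmpty X] : homCount G X 0 = 1 := by
  rw [homCount, Nat.card_eq_one_iff_unique]
  exact ⟨⟨fun _ _ => Subtype.ext (MonoidHom.ext fun _ => Subsingleton.elim _ _)⟩,
    ⟨1, by simp [orbitCount]⟩⟩

theorem homCount_zero_of_nonempty [Finite X] [Nonempty X] : homCount G X 0 = 0 := by
  rw [homCount, Nat.card_eq_zero]
  refine .inl ⟨fun ⟨φ, hφ⟩ => ?_⟩
  have : Nonempty (MulAction.orbitRel.Quotient φ.range X) := ⟨Quotient.mk _ (Classical.arbitrary X)⟩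
  exact Nat.card_pos.ne' hφ

variable [MulAction G Q]

/-- The embedding `i` is equivariant for the action on `X` given by `φ`. -/
def Intertwines (φ : G →* Equiv.Perm X) (i : Q ↪ X) : Prop :=
  ∀ g q, φ g (i q) = i (g • q)

theorem Intertwines.apply_mem_range_iff {φ : G →* Equiv.Perm X} {i : Q ↪ X}
    (h : Intertwines φ i) (g : G) (x : X) : φ g x ∉ Set.range i ↔ x ∉ Set.range i := by
  refine not_congr ⟨?_, ?_⟩
  · rintro ⟨q, hq⟩
    exact ⟨g⁻¹ • q, by rw [← h, hq]; simp⟩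
  · rintro ⟨q, rfl⟩
    exact ⟨g • q, (h g q).symm⟩

/-- The action on the complement of an equivariantly embedded `G`-set. -/
def Intertwines.complHom {φ : G →* Equiv.Perm X} {i : Q ↪ X} (h : Intertwines φ i) :
    G →* Equiv.Perm {x // x ∉ Set.range i} where
  toFun g := (φ g).subtypePerm (h.apply_mem_range_iff g)
  map_one' := by ext; simp
  map_mul' g g' := by ext x; exact congrArg (fun f => f (x : X)) (map_mul φ g g')

open Classical in
/-- The action on `X` which is the given one on the image of `i` and `ψ` on its complement. -/
def glueHom (i : Q ↪ X) (ψ : G →* Equiv.Perm {x // x ∉ Set.range i}) : G →* Equiv.Perm X :=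
  (Equiv.Perm.subtypeCongrHom (· ∈ Set.range i)).comp
    (((Equiv.ofInjective i i.injective).permCongrHom.toMonoidHom.comp
      (MulAction.toPermHom G Q)).prod ψ)

theorem intertwines_glueHom (i : Q ↪ X) (ψ : G →* Equiv.Perm {x // x ∉ Set.range i}) :
    Intertwines (glueHom i ψ) i := by
  classical
  intro g q
  change Equiv.Perm.subtypeCongr _ _ (i q) = _
  rw [Equiv.Perm.subtypeCongr.left_apply _ _ (Set.mem_range_self q)]
  exact congrArg i (congrArg (g • ·) (Equiv.ofInjective_symm_apply i.injective q))

theorem glueHom_apply_coe (i : Q ↪ X) (ψ : G →* Equiv.Perm {x // x ∉ Set.range i}) (g : G)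
    (r : {x // x ∉ Set.range i}) : glueHom i ψ g r = ψ g r := by
  classical
  exact Equiv.Perm.subtypeCongr.right_apply _ _ r.2

/-- An action extending a given one on the image of `i` is determined by its restriction to the
complement, which is arbitrary. -/
def intertwinesEquiv (i : Q ↪ X) :
    {φ : G →* Equiv.Perm X // Intertwines φ i} ≃ (G →* Equiv.Perm {x // x ∉ Set.range i}) where
  toFun φ := φ.2.complHom
  invFun ψ := ⟨glueHom i ψ, intertwines_glueHom i ψ⟩
  left_inv := by
    rintro ⟨φ, h⟩
    ext g x
    by_cases hx : x ∈ Set.range i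
    · obtain ⟨q, rfl⟩ := hx
      exact (intertwines_glueHom i _ g q).trans (h g q).symm
    · exact glueHom_apply_coe i h.complHom g ⟨x, hx⟩
  right_inv ψ := by
    ext g r
    exact glueHom_apply_coe i ψ g r

theorem Intertwines.orbitCount_eq [MulAction.IsPretransitive G Q] [Nonempty Q] [Finite X]
    {φ : G →* Equiv.Perm X} {i : Q ↪ X} (h : Intertwines φ i) :
    orbitCount φ = orbitCount h.complHom + 1 := by
  rw [orbitCount, orbitCount, ← Finite.card_option]
  let f : Option (MulAction.orbitRel.Quotient h.complHom.range {x // x ∉ Set.range i}) →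
      MulAction.orbitRel.Quotient φ.range X := fun o =>
    o.elim (Quotient.mk _ (i (Classical.arbitrary Q)))
      (Quotient.map' Subtype.val fun a b hab => by
        obtain ⟨g, rfl⟩ := orbitRel_range_iff.1 hab
        exact orbitRel_range_iff.2 ⟨g, rfl⟩)
  have none_ne_some (r : {x // x ∉ Set.range i}) : f (some (Quotient.mk _ r)) ≠ f none := by
    intro hr
    obtain ⟨g, hg⟩ := orbitRel_range_iff.1 (Quotient.exact hr)
    exact r.2 ⟨_, (h g _).symm.trans hg⟩
  refine (Nat.card_congr (Equiv.ofBijective f ⟨?_, ?_⟩)).symm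
  · rintro (_ | ⟨⟨a⟩⟩) (_ | ⟨⟨b⟩⟩) hab
    · rfl
    · exact absurd hab.symm (none_ne_some b)
    · exact absurd hab (none_ne_some a)
    · obtain ⟨g, hg⟩ := orbitRel_range_iff.1 (Quotient.exact hab)
      exact congrArg some (Quotient.sound (orbitRel_range_iff.2 ⟨g, Subtype.ext hg⟩))
  · rintro ⟨y⟩
    by_cases hy : y ∈ Set.range i
    · obtain ⟨q, rfl⟩ := hy
      obtain ⟨g, hg⟩ := MulAction.exists_smul_eq G q (Classical.arbitrary Q)
      exact ⟨none, Quotient.sound (orbitRel_range_iff.2 ⟨g, by rw [h, hg]⟩)⟩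
    · exact ⟨some (Quotient.mk _ ⟨y, hy⟩), rfl⟩

theorem card_intertwines_orbitCount [MulAction.IsPretransitive G Q] [Nonempty Q] [Finite X]
    (i : Q ↪ X) (k : ℕ) :
    Nat.card {φ : G →* Equiv.Perm X // Intertwines φ i ∧ orbitCount φ = k + 1} =
      homCount G {x // x ∉ Set.range i} k :=
  Nat.card_congr ((Equiv.subtypeSubtypeEquivSubtypeInter _ _).symm.trans
    ((intertwinesEquiv i).subtypeEquiv fun φ => by
      rw [φ.2.orbitCount_eq, Nat.add_right_cancel_iff]; rfl))

end OrbitCount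

/-! ### Marking a point of an action -/

section MarkedPoint

variable {G X : Type*} [Group G] {φ : G →* Equiv.Perm X}

theorem exists_intertwines_stabilizer (φ : G →* Equiv.Perm X) (a : X) :
    ∃ (L : Subgroup G) (i : G ⧸ L ↪ X), Intertwines φ i ∧ i (1 : G) = a := by
  let _ : MulAction G X := MulAction.compHom X φ
  exact ⟨MulAction.stabilizer G a, ⟨_, MulAction.injective_ofQuotientStabilizer G a⟩,
    fun g q => (MulAction.ofQuotientStabilizer_smul G a g q).symm, one_smul G a⟩

theorem Intertwines.apply_one {L : Subgroup G} {i : G ⧸ L ↪ X} (h : Intertwines φ i) (g : G) :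
    φ g (i (1 : G)) = i (g : G ⧸ L) := by
  rw [h, MulAction.Quotient.smul_coe, smul_eq_mul, mul_one]

theorem Intertwines.mem_iff {L : Subgroup G} {i : G ⧸ L ↪ X} (h : Intertwines φ i) {g : G} :
    g ∈ L ↔ φ g (i (1 : G)) = i (1 : G) := by
  rw [h.apply_one, i.injective.eq_iff, eq_comm, QuotientGroup.eq, inv_one, one_mul]

theorem Intertwines.subgroup_eq {L L' : Subgroup G} {i : G ⧸ L ↪ X} {i' : G ⧸ L' ↪ X}
    (h : Intertwines φ i) (h' : Intertwines φ i') (ha : i (1 : G) = i' (1 : G)) : L = L' := by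
  ext g
  rw [h.mem_iff, h'.mem_iff, ha]

theorem Intertwines.embedding_eq {L : Subgroup G} {i i' : G ⧸ L ↪ X}
    (h : Intertwines φ i) (h' : Intertwines φ i') (ha : i (1 : G) = i' (1 : G)) : i = i' := by
  ext q
  induction q using QuotientGroup.induction_on with
  | H g => rw [← h.apply_one, ← h'.apply_one, ha]

/-- Actions of `G` on `{1,…,n}` with `k` orbits, one of which is identified with `G ⧸ L` for a
subgroup `L` of index `j + 1`. -/
abbrev MarkedAction (G : Type*) [Group G] (n k : ℕ) : Type _ :=
  Σ j : Fin n, Σ L : {L : Subgroup G // L.index = j + 1}, Σ i : G ⧸ L.1 ↪ Fin n,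
    {φ : G →* Equiv.Perm (Fin n) // Intertwines φ i ∧ orbitCount φ = k}

/-- The image of the identity coset, together with the underlying action. -/
def MarkedAction.point {n k : ℕ} (s : MarkedAction G n k) :
    Fin n × {φ : G →* Equiv.Perm (Fin n) // orbitCount φ = k} :=
  (s.2.2.1 (1 : G), ⟨s.2.2.2.1, s.2.2.2.2.2⟩)

theorem MarkedAction.point_injective (G : Type*) [Group G] (n k : ℕ) :
    Function.Injective (MarkedAction.point : MarkedAction G n k → _) := by
  rintro ⟨⟨j, hj⟩, ⟨L, hL⟩, i, φ, h, hφ⟩ ⟨⟨j', hj'⟩, ⟨L', hL'⟩, i', φ', h', hφ'⟩ hs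
  simp only [MarkedAction.point, Prod.mk.injEq, Subtype.mk.injEq] at hs
  obtain ⟨ha, rfl⟩ := hs
  obtain rfl := h.subgroup_eq h' ha
  obtain rfl := h.embedding_eq h' ha
  obtain rfl : j = j' := Nat.succ_injective (hL.symm.trans hL')
  rfl

theorem MarkedAction.point_surjective (G : Type*) [Group G] (n k : ℕ) :
    Function.Surjective (MarkedAction.point : MarkedAction G n k → _) := by
  rintro ⟨a, φ, hφ⟩
  obtain ⟨L, i, h, ha⟩ := exists_intertwines_stabilizer φ a
  have : Finite (G ⧸ L) := Finite.of_injective i i.injective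
  have index_ne_zero : L.index ≠ 0 := Subgroup.index_ne_zero_iff_finite.2 this
  have index_le : L.index ≤ n := by
    simpa [Subgroup.index] using Nat.card_le_card_of_injective i i.injective
  refine ⟨⟨⟨L.index - 1, by lia⟩, ⟨L, ?_⟩, i, φ, h, hφ⟩, Prod.ext ha rfl⟩
  exact (Nat.sub_add_cancel (Nat.one_le_iff_ne_zero.2 index_ne_zero)).symm

theorem finite_quotient_of_index_eq {L : Subgroup G} {d : ℕ} (hd : d ≠ 0) (hL : L.index = d) :
    Finite (G ⧸ L) :=
  Subgroup.index_ne_zero_iff_finite.1 (hL ▸ hd)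

theorem card_compl_range_embedding {Q : Type*} {n : ℕ} (i : Q ↪ Fin n) :
    Nat.card {x // x ∉ Set.range i} = n - Nat.card Q := by
  classical
  have : Fintype Q := @Fintype.ofFinite Q (Finite.of_injective i i.injective)
  rw [Nat.card_eq_fintype_card, Fintype.card_subtype_compl, Fintype.card_fin,
    Nat.card_eq_fintype_card, ← Fintype.card_congr (Equiv.ofInjective i i.injective)]

theorem card_marked_embedding {n : ℕ} (L : Subgroup G) (hL : L.index ≠ 0) (k : ℕ)
    [Finite (G →* Equiv.Perm (Fin n))] :
    Nat.card (Σ i : G ⧸ L ↪ Fin n,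
      {φ : G →* Equiv.Perm (Fin n) // Intertwines φ i ∧ orbitCount φ = k + 1}) =
      n.descFactorial L.index * homCount G (Fin (n - L.index)) k := by
  have := finite_quotient_of_index_eq hL rfl
  have : Fintype (G ⧸ L) := Fintype.ofFinite _
  have card_quotient : Fintype.card (G ⧸ L) = L.index := Nat.card_eq_fintype_card.symm
  have card_fiber (i : G ⧸ L ↪ Fin n) :
      Nat.card {φ : G →* Equiv.Perm (Fin n) // Intertwines φ i ∧ orbitCount φ = k + 1} =
        homCount G (Fin (n - L.index)) k :=
    (card_intertwines_orbitCount i k).trans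
      (homCount_congr (Finite.equivFinOfCardEq (card_compl_range_embedding i)) k)
  classical
  have : Fintype (G ⧸ L ↪ Fin n) := Fintype.ofFinite _
  rw [Nat.card_sigma, Finset.sum_congr rfl fun i _ => card_fiber i, Finset.sum_const,
    Finset.card_univ, Fintype.card_embedding_eq, card_quotient, Fintype.card_fin, smul_eq_mul]

/-- The number of subgroups of `G` of index `n`. -/
def subgroupCount (G : Type*) [Group G] (n : ℕ) : ℕ :=
  Nat.card {L : Subgroup G // L.index = n}

theorem finite_subgroup_of_finite_hom {d : ℕ} (hd : d ≠ 0) [Finite (G →* Equiv.Perm (Fin d))] :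
    Finite {L : Subgroup G // L.index = d} := by
  have exists_intertwines (L : {L : Subgroup G // L.index = d}) :
      ∃ (φ : G →* Equiv.Perm (Fin d)) (i : G ⧸ L.1 ↪ Fin d), Intertwines φ i := by
    have := finite_quotient_of_index_eq hd L.2
    let e : G ⧸ L.1 ≃ Fin d := Finite.equivFinOfCardEq L.2
    exact ⟨e.permCongrHom.toMonoidHom.comp (MulAction.toPermHom G _), e.toEmbedding,
      fun g q => by simp⟩
  choose φ i hi using exists_intertwines
  refine Finite.of_injective (fun L => (φ L, i L (1 : G))) fun L L' h => ?_
  obtain ⟨hφ, ha⟩ := Prod.mk.inj h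
  exact Subtype.ext ((hi L).subgroup_eq (hφ ▸ hi L') ha)

-- Both sides count pairs of an action and a point; the orbit of that point is some `G ⧸ L`.
theorem mul_homCount_succ (G : Type*) [Group G] [∀ n, Finite (G →* Equiv.Perm (Fin n))]
    (n k : ℕ) :
    n * homCount G (Fin n) (k + 1) =
      ∑ j ∈ Finset.range n, subgroupCount G (j + 1) *
        (n.descFactorial (j + 1) * homCount G (Fin (n - (j + 1))) k) := by
  have card_marked : Nat.card (MarkedAction G n (k + 1)) = n * homCount G (Fin n) (k + 1) := by
    rw [Nat.card_congr (Equiv.ofBijective _ ⟨MarkedAction.point_injective G n (k + 1),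
      MarkedAction.point_surjective G n (k + 1)⟩), Nat.card_prod, Nat.card_fin, homCount]
  have finite_embedding (j : ℕ) (L : {L : Subgroup G // L.index = j + 1}) :
      Finite (G ⧸ L.1 ↪ Fin n) := by
    have := finite_quotient_of_index_eq j.succ_ne_zero L.2
    infer_instance
  have finite_subgroup (j : ℕ) : Finite {L : Subgroup G // L.index = j + 1} :=
    finite_subgroup_of_finite_hom j.succ_ne_zero
  rw [← card_marked, Nat.card_sigma, Finset.sum_range]
  refine Finset.sum_congr rfl fun j _ => ?_
  have : Fintype {L : Subgroup G // L.index = j + 1} := Fintype.ofFinite _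
  rw [Nat.card_sigma, Finset.sum_congr rfl fun L _ => (card_marked_embedding L.1
    (by rw [L.2]; lia) k).trans (by rw [L.2]), Finset.sum_const, Finset.card_univ, smul_eq_mul,
    subgroupCount, Nat.card_eq_fintype_card]

end MarkedPoint

/-! ### The exponential formula -/

section ExponentialFormula

theorem natCast_mul_coeff_pow_succ (b : ℕ → ℝ) (n k : ℕ) :
    n * PowerSeries.coeff n (PowerSeries.mk b ^ (k + 1)) =
      (k + 1) * ∑ j ∈ Finset.range n, (j + 1) * b (j + 1) *
        PowerSeries.coeff (n - (j + 1)) (PowerSeries.mk b ^ k) := by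
  rcases n with - | m
  · simp
  have derivative_pow : PowerSeries.derivative ℝ (PowerSeries.mk b ^ (k + 1)) =
      PowerSeries.C ((k : ℝ) + 1) *
        (PowerSeries.derivative ℝ (PowerSeries.mk b) * PowerSeries.mk b ^ k) := by
    rw [(PowerSeries.derivative ℝ).leibniz_pow]
    simp only [Nat.add_sub_cancel, smul_eq_mul, nsmul_eq_mul, map_add, map_natCast, map_one]
    push_cast
    ring
  have coeff_eq := congrArg (PowerSeries.coeff m) derivative_pow
  rw [PowerSeries.coeff_derivative, PowerSeries.coeff_C_mul, PowerSeries.coeff_mul,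
    Finset.Nat.sum_antidiagonal_eq_sum_range_succ_mk] at coeff_eq
  push_cast
  rw [mul_comm, coeff_eq]
  congr 1
  refine Finset.sum_congr rfl fun j _ => ?_
  simp only [PowerSeries.coeff_derivative, PowerSeries.coeff_mk]
  ring

variable (G : Type*) [Group G]

/-- The coefficients of the exponential generating function of transitive `G`-actions: there are
`n! * orbitWeight G n` of them on `n` points. -/
def orbitWeight (n : ℕ) : ℝ := subgroupCount G n / n

theorem homCount_zero_succ (k : ℕ) : homCount G (Fin 0) (k + 1) = 0 := by
  rw [homCount, Nat.card_eq_zero]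
  refine .inl ⟨fun ⟨φ, hφ⟩ => ?_⟩
  simp [orbitCount] at hφ

theorem homCount_mul_factorial [∀ n, Finite (G →* Equiv.Perm (Fin n))] (n k : ℕ) :
    (homCount G (Fin n) k : ℝ) * k.factorial =
      n.factorial * PowerSeries.coeff n (PowerSeries.mk (orbitWeight G) ^ k) := by
  induction k generalizing n with
  | zero =>
    rcases n with - | n
    · simp [homCount_zero_of_isEmpty]
    · simp [homCount_zero_of_nonempty, PowerSeries.coeff_one]
  | succ k ih =>
    rcases eq_or_ne n 0 with rfl | hn
    · simp [homCount_zero_succ, orbitWeight]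
    have recursion : (n : ℝ) * homCount G (Fin n) (k + 1) =
        ∑ j ∈ Finset.range n, (subgroupCount G (j + 1) : ℝ) *
          (n.descFactorial (j + 1) * homCount G (Fin (n - (j + 1))) k) := by
      exact_mod_cast mul_homCount_succ G n k
    apply mul_left_cancel₀ (Nat.cast_ne_zero.2 hn : (n : ℝ) ≠ 0)
    rw [← mul_assoc, recursion, mul_left_comm, natCast_mul_coeff_pow_succ, Nat.factorial_succ,
      Finset.sum_mul, Finset.mul_sum, Finset.mul_sum]
    refine Finset.sum_congr rfl fun j hj => ?_
    have factorial_split : ((n - (j + 1)).factorial : ℝ) * n.descFactorial (j + 1) =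
        n.factorial := by
      exact_mod_cast Nat.factorial_mul_descFactorial (Nat.succ_le_of_lt (Finset.mem_range.1 hj))
    have weight_eq : ((j : ℝ) + 1) * orbitWeight G (j + 1) = subgroupCount G (j + 1) := by
      rw [orbitWeight, Nat.cast_succ, mul_div_cancel₀ _ (Nat.cast_add_one_ne_zero j)]
    rw [← factorial_split, weight_eq]
    push_cast
    linear_combination
      ((subgroupCount G (j + 1) : ℝ) * n.descFactorial (j + 1) * (k + 1)) * ih (n - (j + 1))

end ExponentialFormula

/-! ### Finite-index subgroups of `G × ℤ` -/

section TwistedSubgroup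

theorem index_eq_card_of_fibers {A B : Type*} [Group A] (L : Subgroup A) {F : A → B}
    (surj : Function.Surjective F) (fibers : ∀ a b, F a = F b ↔ a⁻¹ * b ∈ L) :
    L.index = Nat.card B := by
  let f : A ⧸ L → B := Quotient.lift F fun a b hab =>
    (fibers a b).2 (QuotientGroup.leftRel_apply.1 hab)
  refine Nat.card_congr (Equiv.ofBijective f ⟨?_, fun b => ?_⟩)
  · rintro ⟨a⟩ ⟨b⟩ hab
    exact QuotientGroup.eq.2 ((fibers a b).1 hab)
  · obtain ⟨a, rfl⟩ := surj b
    exact ⟨a, rfl⟩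

variable {G : Type*} [CommGroup G]

/-- The subgroup of `G × ℤ` meeting `G × 0` in `H`, projecting onto `eℤ` and containing the lifts
`(g, e)` with `g ∈ c`. Every finite-index subgroup arises so from a unique triple. -/
def twistedSubgroup (H : Subgroup G) (c : G ⧸ H) (e : ℕ) : Subgroup (G × Multiplicative ℤ) where
  carrier := {p | ∃ r : ℤ, p.2.toAdd = e * r ∧ (p.1 : G ⧸ H) = c ^ r}
  mul_mem' := by
    rintro a b ⟨r, hr, hr'⟩ ⟨s, hs, hs'⟩
    exact ⟨r + s, by simp [hr, hs, mul_add], by simp [zpow_add, hr', hs']⟩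
  one_mem' := ⟨0, by simp, by simp⟩
  inv_mem' := by
    rintro a ⟨r, hr, hr'⟩
    exact ⟨-r, by simp [hr], by simp [hr']⟩

variable {H : Subgroup G} {c : G ⧸ H} {e : ℕ}

theorem mem_twistedSubgroup {p : G × Multiplicative ℤ} :
    p ∈ twistedSubgroup H c e ↔ ∃ r : ℤ, p.2.toAdd = e * r ∧ (p.1 : G ⧸ H) = c ^ r :=
  Iff.rfl

theorem mk_one_mem_twistedSubgroup (he : 0 < e) {g : G} :
    (g, 1) ∈ twistedSubgroup H c e ↔ g ∈ H := by
  simp [mem_twistedSubgroup, he.ne']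

theorem mk_ofAdd_mem_twistedSubgroup (he : 0 < e) {g : G} :
    (g, Multiplicative.ofAdd (e : ℤ)) ∈ twistedSubgroup H c e ↔ (g : G ⧸ H) = c := by
  simp [mem_twistedSubgroup, he.ne']

theorem index_twistedSubgroup (he : 0 < e) : (twistedSubgroup H c e).index = H.index * e := by
  have he' : (e : ℤ) ≠ 0 := by positivity
  let F : G × Multiplicative ℤ → (G ⧸ H) × ZMod e := fun p =>
    ((p.1 : G ⧸ H) * c ^ (-(p.2.toAdd / (e : ℤ))), ((p.2.toAdd : ℤ) : ZMod e))
  have surj : Function.Surjective F := by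
    rintro ⟨a, z⟩
    obtain ⟨m, rfl⟩ := ZMod.intCast_surjective z
    obtain ⟨g, hg⟩ := QuotientGroup.mk_surjective (a * c ^ (m / (e : ℤ)))
    exact ⟨(g, .ofAdd m), by simp [F, hg]⟩
  rw [index_eq_card_of_fibers _ surj, Nat.card_prod, Nat.card_zmod, Subgroup.index]
  rintro ⟨g, m⟩ ⟨g', m'⟩
  have quotient_eq (r : ℤ) (hr : m'.toAdd - m.toAdd = e * r) :
      (g : G ⧸ H) * c ^ (-(m.toAdd / (e : ℤ))) = g' * c ^ (-(m'.toAdd / (e : ℤ))) ↔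
        (g : G ⧸ H)⁻¹ * g' = c ^ r := by
    rw [show m'.toAdd = m.toAdd + e * r by linarith, Int.add_mul_ediv_left _ _ he', neg_add,
      zpow_add, mul_left_comm, mul_comm (g : G ⧸ H), mul_right_inj, zpow_neg, ← div_eq_mul_inv,
      eq_div_iff_mul_eq', inv_mul_eq_iff_eq_mul, eq_comm]
  simp only [F, Prod.mk.injEq, mem_twistedSubgroup, Prod.mk_mul_mk, Prod.inv_mk,
    QuotientGroup.mk_mul, QuotientGroup.mk_inv, toAdd_mul, toAdd_inv,
    ZMod.intCast_eq_intCast_iff_dvd_sub, neg_add_eq_sub]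
  constructor
  · rintro ⟨h, r, hr⟩
    exact ⟨r, hr, (quotient_eq r hr).1 h⟩
  · rintro ⟨r, hr, h⟩
    exact ⟨(quotient_eq r hr).2 h, r, hr⟩

theorem exists_snd_mem_iff_dvd (L : Subgroup (G × Multiplicative ℤ)) :
    ∃ e : ℕ, ∀ m : ℤ, (∃ g, (g, Multiplicative.ofAdd m) ∈ L) ↔ (e : ℤ) ∣ m := by
  let P : AddSubgroup ℤ := Subgroup.toAddSubgroup' (L.map (MonoidHom.snd G (Multiplicative ℤ)))
  have mem_P (m : ℤ) : m ∈ P ↔ ∃ g, (g, Multiplicative.ofAdd m) ∈ L := by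
    change Multiplicative.ofAdd m ∈ L.map (MonoidHom.snd G (Multiplicative ℤ)) ↔ _
    simp [Subgroup.mem_map]
  obtain ⟨a, ha⟩ := Int.subgroup_cyclic P
  refine ⟨a.natAbs, fun m => ?_⟩
  rw [← mem_P, ha, ← AddSubgroup.zmultiples_eq_closure, Int.mem_zmultiples_iff, Int.natAbs_dvd]

theorem twistedSubgroup_comap_inl_eq {L : Subgroup (G × Multiplicative ℤ)} {v : G}
    (hv : (v, Multiplicative.ofAdd (e : ℤ)) ∈ L)
    (dvd : ∀ g m, (g, Multiplicative.ofAdd m) ∈ L → (e : ℤ) ∣ m) :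
    twistedSubgroup (L.comap (MonoidHom.inl G _)) (v : G ⧸ _) e = L := by
  have zpow_mem (r : ℤ) : (v ^ r, Multiplicative.ofAdd (e * r)) ∈ L := by
    simpa [← ofAdd_zsmul, mul_comm] using L.zpow_mem hv r
  have mk_eq_iff (g : G) (r : ℤ) :
      (g : G ⧸ L.comap (MonoidHom.inl G _)) = (v : G ⧸ L.comap (MonoidHom.inl G _)) ^ r ↔
        (g, Multiplicative.ofAdd (e * r)) ∈ L := by
    rw [← QuotientGroup.mk_zpow, eq_comm, QuotientGroup.eq, Subgroup.mem_comap,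
      ← L.mul_mem_cancel_left (zpow_mem r)]
    simp
  ext ⟨g, m⟩
  rw [mem_twistedSubgroup]
  constructor
  · rintro ⟨r, hr, h⟩
    rw [mk_eq_iff, ← hr] at h
    exact h
  · intro h
    obtain ⟨r, hr⟩ := dvd g m.toAdd h
    exact ⟨r, hr, (mk_eq_iff g r).2 (hr ▸ h)⟩

theorem exists_twistedSubgroup_eq (L : Subgroup (G × Multiplicative ℤ)) (hL : L.index ≠ 0) :
    ∃ (H : Subgroup G) (c : G ⧸ H) (e : ℕ), 0 < e ∧ twistedSubgroup H c e = L := by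
  obtain ⟨e, he⟩ := exists_snd_mem_iff_dvd L
  obtain ⟨v, hv⟩ := (he e).2 dvd_rfl
  have index_mem : ((1 : G), Multiplicative.ofAdd (L.index : ℤ)) ∈ L := by
    simpa [← ofAdd_nsmul] using L.pow_index_mem ((1 : G), Multiplicative.ofAdd (1 : ℤ))
  have dvd_index : e ∣ L.index := by exact_mod_cast (he L.index).1 ⟨1, index_mem⟩
  exact ⟨_, v, e, Nat.pos_of_dvd_of_pos dvd_index (Nat.pos_of_ne_zero hL),
    twistedSubgroup_comap_inl_eq hv fun g m h => (he m).1 ⟨g, h⟩⟩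

/-- The subgroup of index `n` in `G × ℤ` attached to a coset of a subgroup of `G` whose index
divides `n`. -/
def subgroupOfCoset (G : Type*) [CommGroup G] (n : ℕ)
    (s : Σ d : n.divisors, Σ H : {H : Subgroup G // H.index = d}, G ⧸ H.1) :
    {L : Subgroup (G × Multiplicative ℤ) // L.index = n} :=
  ⟨twistedSubgroup s.2.1.1 s.2.2 (n / s.1), by
    rw [index_twistedSubgroup (Nat.div_pos (Nat.divisor_le s.1.2) (Nat.pos_of_mem_divisors s.1.2)),
      s.2.1.2, Nat.mul_div_cancel' (Nat.dvd_of_mem_divisors s.1.2)]⟩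

theorem subgroupOfCoset_injective (n : ℕ) : Function.Injective (subgroupOfCoset G n) := by
  rintro ⟨⟨d, hd⟩, ⟨H, hH⟩, c⟩ ⟨⟨d', hd'⟩, ⟨H', hH'⟩, c'⟩ heq
  simp only [subgroupOfCoset, Subtype.mk.injEq] at heq hH hH'
  have pos {d : ℕ} (hd : d ∈ n.divisors) : 0 < n / d :=
    Nat.div_pos (Nat.divisor_le hd) (Nat.pos_of_mem_divisors hd)
  obtain rfl : H = H' := by
    ext g
    rw [← mk_one_mem_twistedSubgroup (pos hd), heq, mk_one_mem_twistedSubgroup (pos hd')]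
  obtain rfl : d = d' := hH.symm.trans hH'
  obtain ⟨g, rfl⟩ := QuotientGroup.mk_surjective c
  obtain rfl : (g : G ⧸ H) = c' := by
    rw [← mk_ofAdd_mem_twistedSubgroup (pos hd), ← heq, mk_ofAdd_mem_twistedSubgroup (pos hd)]
  rfl

theorem subgroupOfCoset_surjective {n : ℕ} (hn : n ≠ 0) :
    Function.Surjective (subgroupOfCoset G n) := by
  rintro ⟨L, rfl⟩
  obtain ⟨H, c, e, he, rfl⟩ := exists_twistedSubgroup_eq L hn
  have hi : (twistedSubgroup H c e).index = H.index * e := index_twistedSubgroup he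
  have index_pos : 0 < H.index := Nat.pos_of_ne_zero fun h => hn (by rw [hi, h, zero_mul])
  refine ⟨⟨⟨H.index, Nat.mem_divisors.2 ⟨⟨e, hi⟩, hn⟩⟩, ⟨H, rfl⟩, c⟩, Subtype.ext ?_⟩
  simp only [subgroupOfCoset, hi, Nat.mul_div_cancel_left e index_pos]

theorem subgroupCount_prod_int
    (hG : ∀ d ≠ 0, Finite {H : Subgroup G // H.index = d}) {n : ℕ} (hn : n ≠ 0) :
    subgroupCount (G × Multiplicative ℤ) n = ∑ d ∈ n.divisors, d * subgroupCount G d := by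
  have finite_subgroup (d : n.divisors) : Finite {H : Subgroup G // H.index = d} :=
    hG _ (Nat.pos_of_mem_divisors d.2).ne'
  have finite_quotient (d : n.divisors) (H : {H : Subgroup G // H.index = d}) :
      Finite (G ⧸ H.1) :=
    finite_quotient_of_index_eq (Nat.pos_of_mem_divisors d.2).ne' H.2
  have (d : n.divisors) : Fintype {H : Subgroup G // H.index = d} := Fintype.ofFinite _
  rw [subgroupCount, ← Nat.card_congr (Equiv.ofBijective _
    ⟨subgroupOfCoset_injective n, subgroupOfCoset_surjective hn⟩), Nat.card_sigma,
    ← Finset.sum_coe_sort n.divisors]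
  refine Finset.sum_congr rfl fun d _ => ?_
  rw [Nat.card_sigma, Finset.sum_congr rfl fun H _ => show Nat.card (G ⧸ H.1) = d from H.2,
    Finset.sum_const, Finset.card_univ, smul_eq_mul, mul_comm, subgroupCount,
    Nat.card_eq_fintype_card]

end TwistedSubgroup

/-! ### Commuting tuples as actions of `ℤ^ℓ` -/

section Lattice

/-- The free abelian group of rank `ℓ`, written multiplicatively so that commuting `ℓ`-tuples in a
group `M` are homomorphisms `IntLattice ℓ →* M`. -/
abbrev IntLattice (ℓ : ℕ) : Type := Fin ℓ → Multiplicative ℤ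

/-- Commuting tuples are the homomorphisms out of `ℤ^ℓ`, through the images of the basis. -/
def commutingTupleEquiv (ℓ : ℕ) (M : Type*) [Group M] :
    {σ : Fin ℓ → M // ∀ i j, σ i * σ j = σ j * σ i} ≃ (IntLattice ℓ →* M) :=
  (Equiv.subtypeEquiv (Equiv.piCongrRight fun _ => zpowersHom M) (by
    intro σ
    constructor
    · intro h i j _ x y
      exact Commute.zpow_zpow (h i j) _ _
    · intro h i j
      by_cases hij : i = j
      · rw [hij]
      · have commute : Commute (σ i) (σ j) := by
          simpa [zpowersHom_apply] using h hij (.ofAdd 1) (.ofAdd 1)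
        exact commute)).trans MonoidHom.noncommPiCoprodEquiv

theorem range_commutingTupleEquiv {ℓ : ℕ} {M : Type*} [Group M]
    (σ : {σ : Fin ℓ → M // ∀ i j, σ i * σ j = σ j * σ i}) :
    (commutingTupleEquiv ℓ M σ).range = Subgroup.closure (Set.range σ.1) := by
  calc (commutingTupleEquiv ℓ M σ).range = ⨆ i, (zpowersHom M (σ.1 i)).range :=
        MonoidHom.noncommPiCoprod_range (hcomm := fun i j _ x y =>
          Commute.zpow_zpow (σ.2 i j) _ _)
    _ = ⨆ i, Subgroup.closure {σ.1 i} := iSup_congr fun i => by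
        rw [← Subgroup.zpowers_eq_closure]; rfl
    _ = Subgroup.closure (Set.range σ.1) := by
        rw [← Subgroup.closure_iUnion, Set.iUnion_singleton_eq_range]

instance finite_lattice_hom (ℓ : ℕ) (M : Type*) [Group M] [Finite M] :
    Finite (IntLattice ℓ →* M) :=
  Finite.of_equiv _ (commutingTupleEquiv ℓ M)

theorem Acount_eq_homCount (ℓ n k : ℕ) : Acount ℓ n k = homCount (IntLattice ℓ) (Fin n) k :=
  Nat.card_congr ((Equiv.subtypeSubtypeEquivSubtypeInter _ (fun σ => kappa σ = k)).symm.trans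
    ((commutingTupleEquiv ℓ _).subtypeEquiv fun σ => by
      rw [kappa, orbitCount, range_commutingTupleEquiv]))

theorem Acount_div_factorial (ℓ n k : ℕ) :
    (Acount ℓ n k : ℝ) / n.factorial =
      PowerSeries.coeff n (PowerSeries.mk (orbitWeight (IntLattice ℓ)) ^ k) / k.factorial := by
  rw [div_eq_div_iff (by positivity) (by positivity), Acount_eq_homCount, homCount_mul_factorial,
    mul_comm]

theorem subgroupCount_congr {A B : Type*} [Group A] [Group B] (e : A ≃* B) (n : ℕ) :
    subgroupCount A n = subgroupCount B n :=
  Nat.card_congr (e.mapSubgroup.toEquiv.subtypeEquiv fun L => by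
    rw [← Subgroup.index_map_of_bijective (f := e.toMonoidHom) e.bijective L]; rfl)

theorem subgroupCount_lattice_zero (n : ℕ) :
    subgroupCount (IntLattice 0) n = if n = 1 then 1 else 0 := by
  have index_eq_one (L : Subgroup (IntLattice 0)) : L.index = 1 :=
    Subgroup.index_eq_one.2 (Subsingleton.elim _ _)
  simp only [subgroupCount, index_eq_one, eq_comm (a := n)]
  split_ifs with h <;> simp [h]

theorem subgroupCount_lattice_succ (ℓ : ℕ) {n : ℕ} (hn : n ≠ 0) :
    subgroupCount (IntLattice (ℓ + 1)) n =
      ∑ d ∈ n.divisors, d * subgroupCount (IntLattice ℓ) d := by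
  let e : IntLattice (ℓ + 1) ≃* IntLattice ℓ × Multiplicative ℤ :=
    { (Fin.consEquiv fun _ => Multiplicative ℤ).symm.trans (Equiv.prodComm _ _) with
      map_mul' := fun _ _ => rfl }
  rw [subgroupCount_congr e,
    subgroupCount_prod_int (fun d hd => finite_subgroup_of_finite_hom hd) hn]

end Lattice

/-! ### Counting sublattices by Dirichlet convolution -/

section LatticeCount

/-- The number of sublattices of `ℤ^ℓ` of given positive index. -/
def latticeCount (ℓ : ℕ) : ArithmeticFunction ℕ :=
  ⟨fun n => if n = 0 then 0 else subgroupCount (IntLattice ℓ) n, if_pos rfl⟩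

theorem latticeCount_apply (ℓ : ℕ) {n : ℕ} (hn : n ≠ 0) :
    latticeCount ℓ n = subgroupCount (IntLattice ℓ) n :=
  if_neg hn

theorem id_pmul_mul (f g : ArithmeticFunction ℕ) :
    ArithmeticFunction.id.pmul (f * g) =
      ArithmeticFunction.id.pmul f * ArithmeticFunction.id.pmul g := by
  ext n
  simp only [ArithmeticFunction.pmul_apply, ArithmeticFunction.mul_apply,
    ArithmeticFunction.id_apply, Finset.mul_sum]
  refine Finset.sum_congr rfl fun x hx => ?_
  rw [← (Nat.mem_divisorsAntidiagonal.1 hx).1]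
  ring

theorem id_pmul_pow (k : ℕ) :
    ArithmeticFunction.id.pmul (ArithmeticFunction.pow k) = ArithmeticFunction.pow (k + 1) := by
  ext n
  obtain rfl | hn := eq_or_ne n 0
  · simp
  · simp [ArithmeticFunction.pow_apply, hn, pow_succ, mul_comm]

theorem latticeCount_zero : latticeCount 0 = 1 := by
  ext n
  obtain rfl | hn := eq_or_ne n 0
  · simp
  · rw [latticeCount_apply 0 hn, subgroupCount_lattice_zero, ArithmeticFunction.one_apply]

theorem latticeCount_succ (ℓ : ℕ) :
    latticeCount (ℓ + 1) =
      ArithmeticFunction.id.pmul (latticeCount ℓ) * ArithmeticFunction.zeta := by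
  ext n
  rw [ArithmeticFunction.mul_zeta_apply]
  obtain rfl | hn := eq_or_ne n 0
  · simp
  · rw [latticeCount_apply _ hn, subgroupCount_lattice_succ _ hn]
    refine Finset.sum_congr rfl fun d hd => ?_
    rw [ArithmeticFunction.pmul_apply, ArithmeticFunction.id_apply,
      latticeCount_apply _ (Nat.pos_of_mem_divisors hd).ne']

theorem latticeCount_succ_eq_mul_pow (ℓ : ℕ) :
    latticeCount (ℓ + 1) = latticeCount ℓ * ArithmeticFunction.pow ℓ := by
  induction ℓ with
  | zero =>
    have id_pmul_one : ArithmeticFunction.id.pmul (1 : ArithmeticFunction ℕ) = 1 := by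
      ext n
      simp +contextual [ArithmeticFunction.one_apply]
    rw [latticeCount_succ, latticeCount_zero, ArithmeticFunction.pow_zero_eq_zeta, id_pmul_one]
  | succ ℓ ih =>
    rw [latticeCount_succ (ℓ + 1), ih, id_pmul_mul, id_pmul_pow, mul_right_comm,
      ← latticeCount_succ, ih]

theorem pow_le_latticeCount_succ (ℓ : ℕ) {n : ℕ} (hn : n ≠ 0) :
    n ^ ℓ ≤ latticeCount (ℓ + 1) n := by
  induction ℓ with
  | zero =>
    rw [latticeCount_succ_eq_mul_pow, latticeCount_zero, one_mul]
    simp [hn]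
  | succ ℓ ih =>
    rw [latticeCount_succ, ArithmeticFunction.mul_zeta_apply, pow_succ']
    exact (Nat.mul_le_mul_left n ih).trans (Finset.single_le_sum
      (f := ArithmeticFunction.id.pmul (latticeCount (ℓ + 1))) (fun _ _ => Nat.zero_le _)
      (Nat.mem_divisors_self n hn))

end LatticeCount

section DirichletSeries

theorem hasSum_mul_arithmeticFunction {f g : ArithmeticFunction ℝ} {w : ℕ → ℝ} {S : ℝ}
    (h : HasSum (fun p : ℕ+ × ℕ+ => f p.1 * g p.2 * w (p.1 * p.2)) S) :
    HasSum (fun n : ℕ+ => (f * g) n * w n) S := by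
  rw [← sigmaAntidiagonalEquivProd.hasSum_iff] at h
  refine h.sigma fun n => ?_
  rw [ArithmeticFunction.mul_apply, Finset.sum_mul,
    ← Finset.sum_coe_sort _ fun x : ℕ × ℕ => f x.1 * g x.2 * w n]
  convert hasSum_fintype _ using 2 with x
  simp only [Function.comp_apply, sigmaAntidiagonalEquivProd, Equiv.coe_fn_mk,
    divisorsAntidiagonalFactors, PNat.mk_coe, (Nat.mem_divisorsAntidiagonal.1 x.2).1]

theorem hasSum_zetaR (r : ℕ) :
    HasSum (fun n : ℕ+ => 1 / (n : ℝ) ^ (r + 2)) (zetaR ((r + 2 : ℕ) : ℝ)) := by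
  rw [zetaR, hasSum_pnat_iff_hasSum_succ (f := fun n : ℕ => 1 / (n : ℝ) ^ (r + 2))]
  have summable : Summable fun n : ℕ => 1 / ((n + 1 : ℕ) : ℝ) ^ (r + 2) :=
    (summable_nat_add_iff 1).2 (Real.summable_one_div_nat_pow.2 (by lia))
  convert summable.hasSum using 3 with m
  rw [Real.rpow_natCast, Nat.cast_succ]

theorem hasSum_latticeCount_div_pow (ℓ r : ℕ) :
    HasSum (fun n : ℕ+ => (latticeCount ℓ n : ℝ) * (1 / (n : ℝ) ^ (ℓ + 1 + r)))
      (∏ i ∈ Finset.range ℓ, zetaR ((r + i + 2 : ℕ) : ℝ)) := by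
  induction ℓ generalizing r with
  | zero =>
    rw [Finset.prod_range_zero]
    convert hasSum_ite_eq (1 : ℕ+) (1 : ℝ) using 2 with n
    rw [latticeCount_zero]
    obtain rfl | hn := eq_or_ne n 1 <;> simp [*]
  | succ ℓ ih =>
    have latticeCount_eq (n : ℕ) : (latticeCount (ℓ + 1) n : ℝ) =
        ((latticeCount ℓ : ArithmeticFunction ℝ) * (ArithmeticFunction.pow ℓ :)) n := by
      rw [latticeCount_succ_eq_mul_pow, ← ArithmeticFunction.natCoe_mul,
        ArithmeticFunction.natCoe_apply]
    simp only [latticeCount_eq]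
    refine hasSum_mul_arithmeticFunction (w := fun n : ℕ => 1 / (n : ℝ) ^ (ℓ + 1 + 1 + r)) ?_
    have summable_prod := (ih (r + 1)).summable.mul_of_nonneg (hasSum_zetaR r).summable
      (fun n => by positivity) (fun n => by positivity)
    have prod_eq : ∏ i ∈ Finset.range (ℓ + 1), zetaR ((r + i + 2 : ℕ) : ℝ) =
        (∏ i ∈ Finset.range ℓ, zetaR ((r + 1 + i + 2 : ℕ) : ℝ)) * zetaR ((r + 2 : ℕ) : ℝ) := by
      rw [Finset.prod_range_succ']
      simp only [add_zero, add_assoc, add_comm, add_left_comm]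
    rw [prod_eq]
    refine ((ih (r + 1)).mul (hasSum_zetaR r) summable_prod).congr_fun fun x => ?_
    have hx : (x.2 : ℕ) ≠ 0 := x.2.ne_zero
    simp only [ArithmeticFunction.natCoe_apply, ArithmeticFunction.pow_apply, hx, and_false,
      if_false]
    push_cast
    field_simp
    ring

theorem Kconst_add_two (p : ℕ) :
    Kconst (p + 2) =
      (p + 1).factorial * ∏ i ∈ Finset.range (p + 1), zetaR ((i + 2 : ℕ) : ℝ) := by
  rw [Kconst, ← Finset.Ico_add_one_right_eq_Icc, Finset.prod_Ico_eq_prod_range]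
  simp only [add_comm 2]
  rfl

end DirichletSeries

/-! ### Exponential moments near the origin -/

section PowExpSum

/-- The series `∑_{n ≥ 1} n ^ p * exp (-n t)`. -/
def powExpSum (p : ℕ) (t : ℝ) : ℝ := ∑' i : ℕ, ((i : ℝ) + 1) ^ p * exp (-t) ^ (i + 1)

theorem powExpSum_nonneg (p : ℕ) (t : ℝ) : 0 ≤ powExpSum p t :=
  tsum_nonneg fun i => by positivity

variable (p : ℕ) {t : ℝ}

theorem hasSum_choose_mul_exp_neg (ht : 0 < t) :
    HasSum (fun i : ℕ => ((i + p).choose p : ℝ) * exp (-t) ^ i)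
      (1 / (1 - exp (-t)) ^ (p + 1)) :=
  hasSum_choose_mul_geometric_of_norm_lt_one p
    (by rw [Real.norm_of_nonneg (exp_pos _).le, Real.exp_lt_one_iff]; linarith)

theorem pow_mul_exp_neg_le_choose_mul (i : ℕ) (t : ℝ) :
    ((i : ℝ) + 1) ^ p * exp (-t) ^ (i + 1) ≤
      p.factorial * exp (-t) * (((i + p).choose p : ℝ) * exp (-t) ^ i) := by
  have pow_le : ((i : ℝ) + 1) ^ p ≤ p.factorial * (i + p).choose p := by
    have := Nat.pow_succ_le_ascFactorial (i + 1) p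
    rw [Nat.ascFactorial_eq_factorial_mul_choose] at this
    exact_mod_cast this
  calc ((i : ℝ) + 1) ^ p * exp (-t) ^ (i + 1)
      ≤ (p.factorial * (i + p).choose p) * exp (-t) ^ (i + 1) := by gcongr
    _ = _ := by ring

theorem choose_mul_le_pow_mul_exp_neg (i : ℕ) (t : ℝ) :
    p.factorial * exp (-t) ^ (p + 1) * (((i + p).choose p : ℝ) * exp (-t) ^ i) ≤
      (((i + p : ℕ) : ℝ) + 1) ^ p * exp (-t) ^ (i + p + 1) := by
  have le_pow : (p.factorial : ℝ) * (i + p).choose p ≤ (((i + p : ℕ) : ℝ) + 1) ^ p := by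
    have := (Nat.ascFactorial_le_pow_add i p).trans
      (Nat.pow_le_pow_left (show i + p ≤ i + p + 1 by lia) p)
    rw [Nat.ascFactorial_eq_factorial_mul_choose] at this
    exact_mod_cast this
  calc p.factorial * exp (-t) ^ (p + 1) * (((i + p).choose p : ℝ) * exp (-t) ^ i)
      = (p.factorial * (i + p).choose p) * exp (-t) ^ (i + p + 1) := by ring
    _ ≤ _ := by gcongr

theorem summable_pow_mul_exp_neg (ht : 0 < t) :
    Summable fun i : ℕ => ((i : ℝ) + 1) ^ p * exp (-t) ^ (i + 1) :=
  ((hasSum_choose_mul_exp_neg p ht).summable.mul_left _).of_nonneg_of_le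
    (fun i => by positivity) fun i => pow_mul_exp_neg_le_choose_mul p i t

theorem hasSum_powExpSum (ht : 0 < t) :
    HasSum (fun n : ℕ+ => (n : ℝ) ^ p * exp (-((n : ℝ) * t))) (powExpSum p t) := by
  rw [hasSum_pnat_iff_hasSum_succ (f := fun n : ℕ => (n : ℝ) ^ p * exp (-((n : ℝ) * t)))]
  refine (summable_pow_mul_exp_neg p ht).hasSum.congr_fun fun i => ?_
  rw [← Real.exp_nat_mul, mul_neg, Nat.cast_succ]

theorem powExpSum_le (ht : 0 < t) :
    powExpSum p t ≤ p.factorial * exp (-t) * (1 / (1 - exp (-t)) ^ (p + 1)) :=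
  have bound := (hasSum_choose_mul_exp_neg p ht).mul_left ((p.factorial : ℝ) * exp (-t))
  hasSum_le (fun i => pow_mul_exp_neg_le_choose_mul p i t)
    (summable_pow_mul_exp_neg p ht).hasSum bound

theorem le_powExpSum (ht : 0 < t) :
    p.factorial * exp (-t) ^ (p + 1) * (1 / (1 - exp (-t)) ^ (p + 1)) ≤ powExpSum p t := by
  have bound := (hasSum_choose_mul_exp_neg p ht).mul_left ((p.factorial : ℝ) * exp (-t) ^ (p + 1))
  exact hasSum_le_inj (fun i => i + p) (add_left_injective p) (fun _ _ => by positivity)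
    (fun i => choose_mul_le_pow_mul_exp_neg p i t) bound (summable_pow_mul_exp_neg p ht).hasSum

theorem div_one_sub_exp_neg_le (ht : 0 < t) : t / (1 - exp (-t)) ≤ 1 + t := by
  have exp_lt_one : exp (-t) < 1 := by rw [Real.exp_lt_one_iff]; linarith
  have exp_mul_le_one : exp (-t) * (1 + t) ≤ 1 :=
    calc exp (-t) * (1 + t) ≤ exp (-t) * exp t := by
          gcongr; linarith [Real.add_one_le_exp t]
      _ = 1 := by rw [← Real.exp_add]; simp
  rw [div_le_iff₀ (by linarith)]
  linarith

theorem pow_mul_powExpSum_le (ht : 0 < t) :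
    t ^ (p + 1) * powExpSum p t ≤ p.factorial * ((p + 1).factorial * exp 1) := by
  have exp_lt_one : exp (-t) < 1 := by rw [Real.exp_lt_one_iff]; linarith
  have : 0 ≤ t / (1 - exp (-t)) := div_nonneg ht.le (by linarith)
  have pow_le : (1 + t) ^ (p + 1) ≤ (p + 1).factorial * exp (1 + t) := by
    rw [← div_le_iff₀' (by positivity)]
    exact Real.pow_div_factorial_le_exp (1 + t) (by linarith) (p + 1)
  calc t ^ (p + 1) * powExpSum p t
      ≤ t ^ (p + 1) * (p.factorial * exp (-t) * (1 / (1 - exp (-t)) ^ (p + 1))) := by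
        gcongr; exact powExpSum_le p ht
    _ = p.factorial * (exp (-t) * (t / (1 - exp (-t))) ^ (p + 1)) := by rw [div_pow]; ring
    _ ≤ p.factorial * (exp (-t) * (1 + t) ^ (p + 1)) := by
        gcongr; exact div_one_sub_exp_neg_le ht
    _ ≤ p.factorial * (exp (-t) * ((p + 1).factorial * exp (1 + t))) := by gcongr
    _ = p.factorial * ((p + 1).factorial * exp 1) := by
        rw [Real.exp_add, Real.exp_neg]; field_simp

theorem tendsto_div_one_sub_exp_neg :
    Tendsto (fun t : ℝ => t / (1 - exp (-t))) (𝓝[>] 0) (𝓝 1) := by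
  have deriv : HasDerivAt (fun t : ℝ => 1 - exp (-t)) 1 0 := by
    simpa using ((hasDerivAt_neg (0 : ℝ)).exp).const_sub 1
  simpa [div_eq_mul_inv, mul_comm] using deriv.tendsto_slope_zero_right.inv₀ one_ne_zero

theorem tendsto_pow_mul_powExpSum :
    Tendsto (fun t : ℝ => t ^ (p + 1) * powExpSum p t) (𝓝[>] 0) (𝓝 (p.factorial : ℝ)) := by
  have tendsto_exp : Tendsto (fun t : ℝ => exp (-t)) (𝓝[>] 0) (𝓝 1) := by
    have : Tendsto (fun t : ℝ => exp (-t)) (𝓝 0) (𝓝 (exp (-0))) :=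
      Continuous.tendsto (by fun_prop) 0
    simpa using this.mono_left nhdsWithin_le_nhds
  have tendsto_div := (tendsto_div_one_sub_exp_neg.pow (p + 1)).congr fun t => div_pow ..
  have upper := (tendsto_exp.const_mul (p.factorial : ℝ)).mul tendsto_div
  have lower := ((tendsto_exp.pow (p + 1)).const_mul (p.factorial : ℝ)).mul tendsto_div
  simp only [one_pow, mul_one] at upper lower
  refine tendsto_of_tendsto_of_tendsto_of_le_of_le' lower upper ?_ ?_ <;>
    filter_upwards [self_mem_nhdsWithin] with t (ht : 0 < t)
  · convert mul_le_mul_of_nonneg_left (le_powExpSum p ht) (pow_nonneg ht.le (p + 1)) using 1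
    ring
  · convert mul_le_mul_of_nonneg_left (powExpSum_le p ht) (pow_nonneg ht.le (p + 1)) using 1
    ring

end PowExpSum

section ExpMoment

/-- The `j`-th moment of the sequence `b` against `exp (-n t)`. -/
def expMoment (b : ℕ → ℝ) (j : ℕ) (t : ℝ) : ℝ :=
  ∑' n : ℕ, b n * (n : ℝ) ^ j * exp (-((n : ℝ) * t))

/-- The contribution of the divisor `d` to the moments of `n ↦ (f * pow (p + 1)) n / n`, rescaled
by `t ^ (p + j + 1)`. -/
def dilatedTerm (f : ArithmeticFunction ℝ) (p j : ℕ) (t : ℝ) (d : ℕ+) : ℝ :=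
  f d * (1 / (d : ℝ) ^ (p + 2)) *
    (((d : ℝ) * t) ^ (p + j + 1) * powExpSum (p + j) ((d : ℝ) * t))

variable {f : ArithmeticFunction ℝ} {p : ℕ} (j : ℕ) {t : ℝ}

theorem dilatedTerm_nonneg (hf : ∀ n, 0 ≤ f n) (ht : 0 < t) (d : ℕ+) :
    0 ≤ dilatedTerm f p j t d := by
  have := powExpSum_nonneg (p + j) ((d : ℝ) * t)
  have := hf d
  unfold dilatedTerm
  positivity

theorem dilatedTerm_le (hf : ∀ n, 0 ≤ f n) (ht : 0 < t) (d : ℕ+) :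
    dilatedTerm f p j t d ≤
      f d * (1 / (d : ℝ) ^ (p + 2)) * ((p + j).factorial * ((p + j + 1).factorial * exp 1)) := by
  have hd : (0 : ℝ) < d := mod_cast d.pos
  exact mul_le_mul_of_nonneg_left (pow_mul_powExpSum_le (p + j) (mul_pos hd ht))
    (mul_nonneg (hf d) (by positivity))

theorem summable_dilatedTerm (hf : ∀ n, 0 ≤ f n)
    (hsum : Summable fun d : ℕ+ => f d * (1 / (d : ℝ) ^ (p + 2))) (ht : 0 < t) :
    Summable (dilatedTerm f p j t) :=
  (hsum.mul_right _).of_nonneg_of_le (dilatedTerm_nonneg j hf ht) (dilatedTerm_le j hf ht)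

theorem hasSum_dilatedTerm (ht : 0 < t) (d : ℕ+) :
    HasSum (fun e : ℕ+ => f d * (e : ℝ) ^ (p + 1) *
        (((d : ℝ) * e) ^ j / ((d : ℝ) * e) * exp (-((d : ℝ) * e * t))))
      (1 / t ^ (p + j + 1) * dilatedTerm f p j t d) := by
  have hd : (0 : ℝ) < d := mod_cast d.pos
  have scaled := (hasSum_powExpSum (p + j) (mul_pos hd ht)).mul_left (f d * (d : ℝ) ^ j / d)
  have total : 1 / t ^ (p + j + 1) * dilatedTerm f p j t d =
      f d * (d : ℝ) ^ j / d * powExpSum (p + j) (d * t) := by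
    rw [dilatedTerm, mul_pow]
    field_simp
    ring
  rw [total]
  refine scaled.congr_fun fun e => ?_
  rw [show (d : ℝ) * e * t = e * (d * t) by ring]
  field_simp
  ring

theorem hasSum_convolution_moment (hf : ∀ n, 0 ≤ f n)
    (hsum : Summable fun d : ℕ+ => f d * (1 / (d : ℝ) ^ (p + 2))) (ht : 0 < t) :
    HasSum (fun n : ℕ => (f * (ArithmeticFunction.pow (p + 1) :)) n / n * (n : ℝ) ^ j *
        exp (-((n : ℝ) * t)))
      (1 / t ^ (p + j + 1) * ∑' d, dilatedTerm f p j t d) := by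
  have rows := hasSum_dilatedTerm (f := f) (p := p) j ht
  have columns : HasSum (fun d => 1 / t ^ (p + j + 1) * dilatedTerm f p j t d)
      (1 / t ^ (p + j + 1) * ∑' d, dilatedTerm f p j t d) :=
    (summable_dilatedTerm j hf hsum ht).hasSum.mul_left _
  have summable_pairs : Summable fun x : ℕ+ × ℕ+ => f x.1 * (x.2 : ℝ) ^ (p + 1) *
      (((x.1 : ℝ) * x.2) ^ j / ((x.1 : ℝ) * x.2) * exp (-((x.1 : ℝ) * x.2 * t))) := by
    rw [summable_prod_of_nonneg fun x => mul_nonneg (mul_nonneg (hf _) (by positivity))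
      (by positivity)]
    exact ⟨fun d => (rows d).summable, columns.summable.congr fun d => (rows d).tsum_eq.symm⟩
  have pairs := summable_pairs.hasSum
  rw [(pairs.prod_fiberwise rows).unique columns] at pairs
  have over_pnat := hasSum_mul_arithmeticFunction (f := f)
    (g := (ArithmeticFunction.pow (p + 1) :))
    (w := fun n => (n : ℝ) ^ j / n * exp (-((n : ℝ) * t))) (pairs.congr_fun fun x => by simp)
  rw [← PNat.coe_injective.hasSum_iff fun n hn => by
    obtain rfl : n = 0 := by
      by_contra h
      exact hn ⟨⟨n, Nat.pos_of_ne_zero h⟩, rfl⟩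
    simp]
  exact over_pnat.congr_fun fun n => by simp only [Function.comp_apply]; ring

theorem tendsto_tsum_dilatedTerm (hf : ∀ n, 0 ≤ f n) {Z : ℝ}
    (hsum : HasSum (fun d : ℕ+ => f d * (1 / (d : ℝ) ^ (p + 2))) Z) :
    Tendsto (fun t : ℝ => ∑' d, dilatedTerm f p j t d) (𝓝[>] 0) (𝓝 ((p + j).factorial * Z)) := by
  rw [mul_comm, ← (hsum.mul_right ((p + j).factorial : ℝ)).tsum_eq]
  refine tendsto_tsum_of_dominated_convergence (hsum.summable.mul_right
    ((p + j).factorial * ((p + j + 1).factorial * exp 1))) (fun d => ?_) ?_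
  · have hd : (0 : ℝ) < d := mod_cast d.pos
    have tendsto_mul : Tendsto (fun t : ℝ => (d : ℝ) * t) (𝓝[>] 0) (𝓝[>] 0) := by
      refine tendsto_nhdsWithin_iff.2 ⟨?_, ?_⟩
      · simpa using ((tendsto_id (x := 𝓝 (0 : ℝ))).mono_left nhdsWithin_le_nhds).const_mul (d : ℝ)
      · filter_upwards [self_mem_nhdsWithin] with t ht using mul_pos hd ht
    exact ((tendsto_pow_mul_powExpSum (p + j)).comp tendsto_mul).const_mul _
  · filter_upwards [self_mem_nhdsWithin] with t (ht : 0 < t) d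
    rw [Real.norm_of_nonneg (dilatedTerm_nonneg j hf ht d)]
    exact dilatedTerm_le j hf ht d

theorem tendsto_pow_mul_expMoment_convolution (hf : ∀ n, 0 ≤ f n) {Z : ℝ}
    (hsum : HasSum (fun d : ℕ+ => f d * (1 / (d : ℝ) ^ (p + 2))) Z) :
    Tendsto (fun t : ℝ => t ^ (p + j + 1) *
        expMoment (fun n => (f * (ArithmeticFunction.pow (p + 1) :)) n / n) j t)
      (𝓝[>] 0) (𝓝 ((p + j).factorial * Z)) := by
  refine (tendsto_tsum_dilatedTerm j hf hsum).congr' ?_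
  filter_upwards [self_mem_nhdsWithin] with t (ht : 0 < t)
  rw [expMoment, (hasSum_convolution_moment j hf hsum.summable ht).tsum_eq]
  field_simp

end ExpMoment

/-! ### The number of components and its Cauchy integrals -/

section ComponentVariance

/-- The `j`-th factorial moment of the weights `k ↦ [z ^ n] B(z) ^ k / k!`, where `B` is the
generating series of `b`. -/
def factorialMoment (b : ℕ → ℝ) (n j : ℕ) : ℝ :=
  ∑ k ∈ Finset.range (n + 1), (k.descFactorial j : ℝ) *
    (PowerSeries.coeff n (PowerSeries.mk b ^ k) / k.factorial)

/-- The variance of the number `k` of components of a random structure of size `n`, the weight of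
`k` being `[z ^ n] B(z) ^ k / k!`. -/
def componentVariance (b : ℕ → ℝ) (n : ℕ) : ℝ :=
  factorialMoment b n 2 / factorialMoment b n 0 + factorialMoment b n 1 / factorialMoment b n 0 -
    (factorialMoment b n 1 / factorialMoment b n 0) ^ 2

theorem coeff_mk_smul_pow (x : ℝ) (b : ℕ → ℝ) (n k : ℕ) :
    PowerSeries.coeff n (PowerSeries.mk (x • b) ^ k) =
      x ^ k * PowerSeries.coeff n (PowerSeries.mk b ^ k) := by
  have mk_smul : PowerSeries.mk (x • b) = x • PowerSeries.mk b := by ext m; simp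
  rw [mk_smul, smul_pow, PowerSeries.coeff_smul, smul_eq_mul]

theorem sum_descFactorial_mul_Acount (ℓ n j : ℕ) (x : ℝ) :
    ∑ k ∈ Finset.range (n + 1), (k.descFactorial j : ℝ) * Acount ℓ n k * x ^ k =
      n.factorial * factorialMoment (x • orbitWeight (IntLattice ℓ)) n j := by
  rw [factorialMoment, Finset.mul_sum]
  refine Finset.sum_congr rfl fun k _ => ?_
  rw [coeff_mk_smul_pow, mul_div_assoc, ← Acount_div_factorial]
  field_simp

theorem expectK_descFactorial (ℓ n j : ℕ) (x : ℝ) :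
    expectK ℓ n x (fun k => (k.descFactorial j : ℝ)) =
      factorialMoment (x • orbitWeight (IntLattice ℓ)) n j /
        factorialMoment (x • orbitWeight (IntLattice ℓ)) n 0 := by
  have total := sum_descFactorial_mul_Acount ℓ n 0 x
  simp only [Nat.descFactorial_zero, Nat.cast_one, one_mul] at total
  rw [expectK, sum_descFactorial_mul_Acount, total, mul_div_mul_left _ _ (by positivity)]

theorem varK_eq_expectK (ℓ n : ℕ) (x : ℝ) :
    varK ℓ n x = expectK ℓ n x (fun k => (k.descFactorial 2 : ℝ)) + meanK ℓ n x -
      meanK ℓ n x ^ 2 := by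
  have descFactorial_two (k : ℕ) : (k.descFactorial 2 : ℝ) = (k : ℝ) ^ 2 - k := by
    cases k with
    | zero => simp
    | succ k => simp [Nat.descFactorial]; ring
  have expand : ∑ k ∈ Finset.range (n + 1), ((k : ℝ) - meanK ℓ n x) ^ 2 * Acount ℓ n k * x ^ k =
      ∑ k ∈ Finset.range (n + 1), (k.descFactorial 2 : ℝ) * Acount ℓ n k * x ^ k +
        (1 - 2 * meanK ℓ n x) * ∑ k ∈ Finset.range (n + 1), (k : ℝ) * Acount ℓ n k * x ^ k +
        meanK ℓ n x ^ 2 * ∑ k ∈ Finset.range (n + 1), (Acount ℓ n k : ℝ) * x ^ k := by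
    simp only [Finset.mul_sum, ← Finset.sum_add_distrib, descFactorial_two]
    exact Finset.sum_congr rfl fun k _ => by ring
  rw [varK, expectK, expand, meanK, expectK, expectK]
  obtain total | total := eq_or_ne (∑ k ∈ Finset.range (n + 1), (Acount ℓ n k : ℝ) * x ^ k) 0
  · simp [total]
  · field_simp
    ring

theorem varK_eq_componentVariance (ℓ n : ℕ) (x : ℝ) :
    varK ℓ n x = componentVariance (x • orbitWeight (IntLattice ℓ)) n := by
  have mean : meanK ℓ n x = expectK ℓ n x (fun k => (k.descFactorial 1 : ℝ)) := by
    simp only [Nat.descFactorial_one, meanK]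
  rw [varK_eq_expectK, mean, expectK_descFactorial, expectK_descFactorial, componentVariance]

end ComponentVariance

section CircleSeries

theorem coeff_mk_pow_succ_mul_pow {R : Type*} [CommRing R] (b : ℕ → R) (z : R) (k n : ℕ) :
    PowerSeries.coeff n (PowerSeries.mk b ^ (k + 1)) * z ^ n =
      ∑ p ∈ Finset.HasAntidiagonal.antidiagonal n,
        PowerSeries.coeff p.1 (PowerSeries.mk b ^ k) * z ^ p.1 * (b p.2 * z ^ p.2) := by
  rw [pow_succ, PowerSeries.coeff_mul, Finset.sum_mul]
  refine Finset.sum_congr rfl fun p hp => ?_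
  rw [← Finset.HasAntidiagonal.mem_antidiagonal.1 hp, PowerSeries.coeff_mk, pow_add]
  ring

theorem summable_norm_coeff_mk_pow {R : Type*} [NormedCommRing R] {b : ℕ → R} {z : R}
    (hb : Summable fun n => ‖b n * z ^ n‖) (k : ℕ) :
    Summable fun n => ‖PowerSeries.coeff n (PowerSeries.mk b ^ k) * z ^ n‖ := by
  induction k with
  | zero =>
    refine summable_of_ne_finset_zero (s := {0}) fun n hn => ?_
    have : n ≠ 0 := by simpa using hn
    simp [PowerSeries.coeff_one, this]
  | succ k ih =>
    simp only [coeff_mk_pow_succ_mul_pow]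
    exact (summable_norm_sum_mul_antidiagonal_of_summable_norm ih hb :)

theorem tsum_coeff_mk_pow {R : Type*} [NormedCommRing R] [CompleteSpace R] {b : ℕ → R} {z : R}
    (hb : Summable fun n => ‖b n * z ^ n‖) (k : ℕ) :
    ∑' n, PowerSeries.coeff n (PowerSeries.mk b ^ k) * z ^ n = (∑' n, b n * z ^ n) ^ k := by
  induction k with
  | zero =>
    rw [tsum_eq_single 0 fun n hn => by simp [PowerSeries.coeff_one, hn]]
    simp
  | succ k ih =>
    simp only [coeff_mk_pow_succ_mul_pow]
    rw [pow_succ, ← ih]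
    exact (tsum_mul_tsum_eq_tsum_sum_antidiagonal_of_summable_norm
      (summable_norm_coeff_mk_pow hb k) hb).symm

theorem coeff_mk_ofReal_pow (b : ℕ → ℝ) (n k : ℕ) :
    PowerSeries.coeff n (PowerSeries.mk (fun m => (b m : ℂ)) ^ k) =
      (PowerSeries.coeff n (PowerSeries.mk b ^ k) : ℝ) := by
  have mk_eq_map : PowerSeries.mk (fun m => (b m : ℂ)) =
      PowerSeries.map Complex.ofRealHom (PowerSeries.mk b) := by ext m; simp
  rw [mk_eq_map, ← map_pow, PowerSeries.coeff_map, Complex.ofRealHom_eq_coe]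

theorem norm_exp_neg_I_mul (n : ℕ) (θ : ℝ) : ‖Complex.exp (-(Complex.I * n * θ))‖ = 1 := by
  simp [Complex.norm_exp]

theorem integral_exp_mul_exp_neg (m n : ℕ) :
    ∫ θ in (-π)..π, Complex.exp (Complex.I * m * θ) * Complex.exp (-(Complex.I * n * θ)) =
      if m = n then 2 * (π : ℂ) else 0 := by
  have combine (θ : ℝ) : Complex.exp (Complex.I * m * θ) * Complex.exp (-(Complex.I * n * θ)) =
      Complex.exp (Complex.I * (m - n) * θ) := by
    rw [← Complex.exp_add]; ring_nf
  simp only [combine]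
  split_ifs with h
  · simp [h, two_mul]
  · have hmn : (m : ℂ) - n ≠ 0 := sub_ne_zero.2 (by exact_mod_cast h)
    have periodic : Complex.exp (Complex.I * (m - n) * (π : ℝ)) =
        Complex.exp (Complex.I * (m - n) * (-π : ℝ)) :=
      Complex.exp_eq_exp_iff_exists_int.2 ⟨(m : ℤ) - n, by push_cast; ring⟩
    rw [integral_exp_mul_complex (mul_ne_zero Complex.I_ne_zero hmn), periodic, sub_self, zero_div]

theorem integral_exp_pow_mul_exp_neg (c : ℂ) (t : ℝ) (m n : ℕ) :
    ∫ θ in (-π)..π, c * Complex.exp (-t + Complex.I * θ) ^ m * Complex.exp (-(Complex.I * n * θ)) =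
      if m = n then 2 * π * exp (-(n * t)) * c else 0 := by
  have split (θ : ℝ) : c * Complex.exp (-t + Complex.I * θ) ^ m *
      Complex.exp (-(Complex.I * n * θ)) = c * exp (-(m * t)) *
        (Complex.exp (Complex.I * m * θ) * Complex.exp (-(Complex.I * n * θ))) := by
    rw [← Complex.exp_nat_mul, mul_add, Complex.exp_add]
    push_cast
    ring_nf
  simp only [split]
  rw [intervalIntegral.integral_const_mul, integral_exp_mul_exp_neg]
  split_ifs with h
  · rw [h]; ring
  · rw [mul_zero]

theorem integral_tsum_mul_exp_pow {c : ℕ → ℂ} {t : ℝ} (hc : Summable fun m => ‖c m‖ * exp (-t) ^ m)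
    (n : ℕ) :
    ∫ θ in (-π)..π, (∑' m, c m * Complex.exp (-t + Complex.I * θ) ^ m) *
        Complex.exp (-(Complex.I * n * θ)) =
      2 * π * exp (-(n * t)) * c n := by
  have norm_term (m : ℕ) (θ : ℝ) :
      ‖c m * Complex.exp (-t + Complex.I * θ) ^ m‖ = ‖c m‖ * exp (-t) ^ m := by
    simp [Complex.norm_exp]
  have summable_term (θ : ℝ) : Summable fun m => c m * Complex.exp (-t + Complex.I * θ) ^ m :=
    Summable.of_norm (by simpa only [norm_term] using hc)
  have exchange := intervalIntegral.hasSum_integral_of_dominated_convergence (μ := volume)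
    (a := -π) (b := π) (fun m _ => ‖c m‖ * exp (-t) ^ m)
    (F := fun m θ => c m * Complex.exp (-t + Complex.I * θ) ^ m *
      Complex.exp (-(Complex.I * n * θ)))
    (f := fun θ => (∑' m, c m * Complex.exp (-t + Complex.I * θ) ^ m) *
      Complex.exp (-(Complex.I * n * θ)))
    (fun m => Continuous.aestronglyMeasurable (by fun_prop))
    (fun m => ae_of_all _ fun θ _ => by rw [norm_mul, norm_term, norm_exp_neg_I_mul, mul_one])
    (ae_of_all _ fun θ _ => hc) intervalIntegrable_const
    (ae_of_all _ fun θ _ => (summable_term θ).hasSum.mul_right _)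
  simp only [integral_exp_pow_mul_exp_neg] at exchange
  exact exchange.unique (hasSum_single n fun m hm => if_neg hm) |>.trans (if_pos rfl)

theorem hasSum_integral_pow_mul_exp {F : ℝ → ℂ} (hF : Continuous F) {C : ℝ} (hC : ∀ θ, ‖F θ‖ ≤ C)
    (j n : ℕ) :
    HasSum (fun k : ℕ => ∫ θ in (-π)..π, F θ ^ j * (F θ ^ k / k.factorial) *
        Complex.exp (-(Complex.I * n * θ)))
      (∫ θ in (-π)..π, F θ ^ j * Complex.exp (F θ) * Complex.exp (-(Complex.I * n * θ))) := by
  refine intervalIntegral.hasSum_integral_of_dominated_convergence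
    (bound := fun k _ => C ^ j * (C ^ k / k.factorial)) ?_ ?_ ?_ intervalIntegrable_const ?_
  · exact fun m => Continuous.aestronglyMeasurable (by fun_prop)
  · refine fun m => ae_of_all _ fun θ _ => ?_
    have : 0 ≤ C := (norm_nonneg _).trans (hC θ)
    rw [norm_mul, norm_exp_neg_I_mul, mul_one, norm_mul, norm_div, norm_pow, norm_pow,
      Complex.norm_natCast]
    gcongr <;> exact hC θ
  · exact ae_of_all _ fun θ _ => (Real.summable_pow_div_factorial _).mul_left _
  · refine ae_of_all _ fun θ _ => HasSum.mul_right _ (HasSum.mul_left _ ?_)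
    rw [Complex.exp_eq_exp_ℂ]
    exact NormedSpace.expSeries_div_hasSum_exp (F θ)

/-- The generating series of `b` on the circle of radius `exp (-t)`, as a function of the angle. -/
def circleSeries (b : ℕ → ℝ) (t θ : ℝ) : ℂ :=
  ∑' k : ℕ, (b k : ℂ) * Complex.exp (-(k * t) + Complex.I * k * θ)

theorem circleSeries_eq_tsum_pow (b : ℕ → ℝ) (t θ : ℝ) :
    circleSeries b t θ = ∑' k : ℕ, (b k : ℂ) * Complex.exp (-t + Complex.I * θ) ^ k := by
  refine tsum_congr fun k => ?_
  rw [← Complex.exp_nat_mul]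
  ring_nf

variable {b : ℕ → ℝ} {t : ℝ}

theorem norm_circleSeries_term (hb : ∀ k, 0 ≤ b k) (t θ : ℝ) (k : ℕ) :
    ‖(b k : ℂ) * Complex.exp (-(k * t) + Complex.I * k * θ)‖ = b k * exp (-(k * t)) := by
  rw [norm_mul, Complex.norm_exp, Complex.norm_real, Real.norm_of_nonneg (hb k)]
  simp

theorem continuous_circleSeries (hb : ∀ k, 0 ≤ b k)
    (hs : Summable fun k : ℕ => b k * exp (-(k * t))) : Continuous (circleSeries b t) :=
  continuous_tsum (fun k => by fun_prop) hs fun k θ => (norm_circleSeries_term hb t θ k).le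

theorem norm_circleSeries_le (hb : ∀ k, 0 ≤ b k) (hs : Summable fun k : ℕ => b k * exp (-(k * t)))
    (θ : ℝ) : ‖circleSeries b t θ‖ ≤ ∑' k : ℕ, b k * exp (-(k * t)) :=
  tsum_of_norm_bounded hs.hasSum fun k => (norm_circleSeries_term hb t θ k).le

theorem integral_circleSeries_pow (hb : ∀ k, 0 ≤ b k)
    (hs : Summable fun k : ℕ => b k * exp (-(k * t))) (k n : ℕ) :
    ∫ θ in (-π)..π, circleSeries b t θ ^ k * Complex.exp (-(Complex.I * n * θ)) =
      2 * π * exp (-(n * t)) * (PowerSeries.coeff n (PowerSeries.mk b ^ k) : ℝ) := by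
  have summable_norm (θ : ℝ) :
      Summable fun m => ‖(b m : ℂ) * Complex.exp (-t + Complex.I * θ) ^ m‖ := by
    refine hs.congr fun m => ?_
    rw [← norm_circleSeries_term hb t θ, ← Complex.exp_nat_mul]
    ring_nf
  have expand (θ : ℝ) : circleSeries b t θ ^ k =
      ∑' m, ((PowerSeries.coeff m (PowerSeries.mk b ^ k) : ℝ) : ℂ) *
        Complex.exp (-t + Complex.I * θ) ^ m := by
    simp only [circleSeries_eq_tsum_pow, ← tsum_coeff_mk_pow (summable_norm θ) k,
      coeff_mk_ofReal_pow]
  simp only [expand]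
  have summable_coeff := summable_norm_coeff_mk_pow (summable_norm 0) k
  refine integral_tsum_mul_exp_pow (summable_coeff.congr fun m => ?_) n
  simp [coeff_mk_ofReal_pow, Complex.norm_exp]

end CircleSeries

section CauchyIntegral

/-- The Cauchy integral of `B ^ j * exp B` over the circle of radius `exp (-t)`, up to the factor
`2 * π * exp (-n t)`. -/
def cauchyIntegral (b : ℕ → ℝ) (n : ℕ) (t : ℝ) (j : ℕ) : ℂ :=
  ∫ θ in (-π)..π, circleSeries b t θ ^ j * Complex.exp (circleSeries b t θ) *
    Complex.exp (-(Complex.I * n * θ))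

/-- The generating series of `b` on the circle of radius `exp (-t)`, centred at its value at
angle `0`. -/
def circleIncrement (b : ℕ → ℝ) (t θ : ℝ) : ℂ := circleSeries b t θ - circleSeries b t 0

/-- The integral `cauchyIntegral` with the centred generating series in place of `B`. -/
def centredIntegral (b : ℕ → ℝ) (n : ℕ) (t : ℝ) (j : ℕ) : ℂ :=
  ∫ θ in (-π)..π, circleIncrement b t θ ^ j *
    Complex.exp (circleIncrement b t θ - Complex.I * n * θ)

variable {b : ℕ → ℝ} {t : ℝ}

theorem coeff_mk_pow_eq_zero (hb : b 0 = 0) {n k : ℕ} (hnk : n < k) :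
    PowerSeries.coeff n (PowerSeries.mk b ^ k) = 0 := by
  have one_le_order : (1 : ℕ∞) ≤ (PowerSeries.mk b).order := by
    rw [PowerSeries.one_le_order_iff_constCoeff_eq_zero]
    simpa using hb
  apply PowerSeries.coeff_of_lt_order
  calc (n : ℕ∞) < k := by exact_mod_cast hnk
    _ = k • (1 : ℕ∞) := by simp
    _ ≤ k • (PowerSeries.mk b).order := by gcongr
    _ ≤ _ := PowerSeries.le_order_pow _ _

theorem hasSum_factorialMoment (hb : b 0 = 0) (n j : ℕ) :
    HasSum (fun k => PowerSeries.coeff n (PowerSeries.mk b ^ (k + j)) / k.factorial)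
      (factorialMoment b n j) := by
  have all_k : HasSum (fun k => (k.descFactorial j : ℝ) *
      (PowerSeries.coeff n (PowerSeries.mk b ^ k) / k.factorial)) (factorialMoment b n j) :=
    hasSum_sum_of_ne_finset_zero fun k hk => by
      rw [coeff_mk_pow_eq_zero hb (by simpa using hk), zero_div, mul_zero]
  rw [← (add_left_injective j).hasSum_iff fun k hk => by
    have hkj : k < j := by
      by_contra! hjk
      exact hk ⟨k - j, Nat.sub_add_cancel hjk⟩
    simp [Nat.descFactorial_of_lt hkj]] at all_k
  refine all_k.congr_fun fun k => ?_
  have factorial_mul : (k.factorial : ℝ) * (k + j).descFactorial j = (k + j).factorial := by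
    exact_mod_cast Nat.add_sub_cancel k j ▸ Nat.factorial_mul_descFactorial (Nat.le_add_left j k)
  rw [Function.comp_apply, ← factorial_mul]
  have : ((k + j).descFactorial j : ℝ) ≠ 0 := by
    simp [Nat.descFactorial_eq_zero_iff_lt]
  field_simp

theorem cauchyIntegral_eq (hb : ∀ k, 0 ≤ b k) (hb0 : b 0 = 0)
    (hs : Summable fun k : ℕ => b k * exp (-(k * t))) (n j : ℕ) :
    cauchyIntegral b n t j = 2 * π * exp (-(n * t)) * factorialMoment b n j := by
  refine (hasSum_integral_pow_mul_exp (continuous_circleSeries hb hs)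
    (norm_circleSeries_le hb hs) j n).unique ?_
  have termwise := (Complex.hasSum_ofReal.2 (hasSum_factorialMoment hb0 n j)).mul_left
    (2 * π * exp (-(n * t)) : ℂ)
  refine termwise.congr_fun fun k => ?_
  rw [Complex.ofReal_div, Complex.ofReal_natCast, mul_div_assoc',
    ← integral_circleSeries_pow hb hs (k + j) n, ← intervalIntegral.integral_div]
  congr 1 with θ
  ring

theorem centredIntegral_eq (hb : ∀ k, 0 ≤ b k) (hs : Summable fun k : ℕ => b k * exp (-(k * t)))
    (n j : ℕ) :
    centredIntegral b n t j = Complex.exp (-circleSeries b t 0) *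
      ∑ i ∈ Finset.range (j + 1),
        (-circleSeries b t 0) ^ (j - i) * j.choose i * cauchyIntegral b n t i := by
  have := continuous_circleSeries hb hs
  simp only [centredIntegral, circleIncrement, cauchyIntegral,
    ← intervalIntegral.integral_const_mul]
  rw [← intervalIntegral.integral_finsetSum fun i _ =>
    Continuous.intervalIntegrable (by fun_prop) _ _, ← intervalIntegral.integral_const_mul]
  congr 1 with θ
  have exp_split : Complex.exp (circleSeries b t θ - circleSeries b t 0 - Complex.I * n * θ) =
      Complex.exp (-circleSeries b t 0) *
        (Complex.exp (circleSeries b t θ) * Complex.exp (-(Complex.I * n * θ))) := by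
    rw [← Complex.exp_add, ← Complex.exp_add]; ring_nf
  rw [exp_split, sub_eq_add_neg, add_pow, Finset.sum_mul, Finset.mul_sum]
  exact Finset.sum_congr rfl fun i _ => by ring

theorem componentVariance_eq_centredIntegral (hb : ∀ k, 0 ≤ b k) (hb0 : b 0 = 0)
    (hs : Summable fun k : ℕ => b k * exp (-(k * t))) {n : ℕ} (h0 : centredIntegral b n t 0 ≠ 0) :
    (componentVariance b n : ℂ) =
      centredIntegral b n t 2 / centredIntegral b n t 0 +
        centredIntegral b n t 1 / centredIntegral b n t 0 + circleSeries b t 0 -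
        (centredIntegral b n t 1 / centredIntegral b n t 0) ^ 2 := by
  have exp_ne_zero := Complex.exp_ne_zero (-circleSeries b t 0)
  have moment_ne_zero : (factorialMoment b n 0 : ℂ) ≠ 0 := by
    intro moment
    exact h0 (by simp [centredIntegral_eq hb hs, cauchyIntegral_eq hb hb0 hs, moment])
  simp only [centredIntegral_eq hb hs, cauchyIntegral_eq hb hb0 hs, Finset.sum_range_succ,
    Finset.sum_range_zero, Nat.choose, componentVariance]
  push_cast
  field_simp
  ring

end CauchyIntegral

/-! ### Local and global estimates on the circle -/

section Taylor

theorem norm_exp_I_mul_sub_one_sub_le (y : ℝ) :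
    ‖Complex.exp (Complex.I * y) - 1 - Complex.I * y‖ ≤ 3 * |y| ^ 2 := by
  have norm_arg : ‖Complex.I * (y : ℂ)‖ = |y| := by simp
  obtain small | large := le_or_gt |y| 1
  · have := Complex.norm_exp_sub_one_sub_id_le (norm_arg.trans_le small)
    rw [norm_arg] at this
    linarith [sq_nonneg |y|]
  · have first_order : ‖Complex.exp (Complex.I * y) - 1‖ ≤ |y| := by
      simpa using Real.norm_exp_I_mul_ofReal_sub_one_le (x := y)
    calc _ ≤ ‖Complex.exp (Complex.I * y) - 1‖ + ‖Complex.I * (y : ℂ)‖ := norm_sub_le _ _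
      _ ≤ |y| + |y| := by rw [norm_arg]; gcongr
      _ ≤ _ := by nlinarith

theorem norm_exp_I_mul_sub_one_sub_add_le (y : ℝ) :
    ‖Complex.exp (Complex.I * y) - 1 - Complex.I * y + y ^ 2 / 2‖ ≤ 4 * |y| ^ 3 := by
  have norm_arg : ‖Complex.I * (y : ℂ)‖ = |y| := by simp
  obtain small | large := le_or_gt |y| 1
  · have remainder := Complex.exp_bound (norm_arg.trans_le small) (n := 3) (by norm_num)
    have taylor : ∑ m ∈ Finset.range 3, (Complex.I * (y : ℂ)) ^ m / m.factorial =
        1 + Complex.I * y - y ^ 2 / 2 := by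
      simp only [Finset.sum_range_succ, Finset.sum_range_zero, mul_pow, Complex.I_sq]
      norm_num [Nat.factorial]
      ring
    rw [taylor, norm_arg] at remainder
    calc _ = ‖Complex.exp (Complex.I * y) - (1 + Complex.I * y - y ^ 2 / 2)‖ := by ring_nf
      _ ≤ _ := remainder
      _ ≤ |y| ^ 3 * 4 := by gcongr; norm_num [Nat.factorial]
      _ = _ := mul_comm _ _
  · calc _ ≤ ‖Complex.exp (Complex.I * y) - 1 - Complex.I * y‖ + ‖(y : ℂ) ^ 2 / 2‖ :=
          norm_add_le _ _
      _ ≤ 3 * |y| ^ 2 + |y| ^ 2 / 2 := by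
          gcongr
          · exact norm_exp_I_mul_sub_one_sub_le y
          · simp
      _ ≤ _ := by nlinarith [sq_nonneg |y|]

variable {b : ℕ → ℝ} {t : ℝ}

theorem hasSum_expMoment {j : ℕ}
    (hs : Summable fun k : ℕ => b k * (k : ℝ) ^ j * exp (-((k : ℝ) * t))) :
    HasSum (fun k : ℕ => (b k : ℂ) * (exp (-(k * t)) : ℝ) * (k : ℂ) ^ j) (expMoment b j t : ℂ) := by
  refine (Complex.hasSum_ofReal.2 hs.hasSum).congr_fun fun k => ?_
  push_cast
  ring

theorem hasSum_circleSeries (hb : ∀ k, 0 ≤ b k) (hs : Summable fun k : ℕ => b k * exp (-(k * t)))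
    (θ : ℝ) :
    HasSum (fun k : ℕ => (b k : ℂ) * (exp (-(k * t)) : ℝ) * Complex.exp (Complex.I * (k * θ : ℝ)))
      (circleSeries b t θ) := by
  have summable_term : Summable fun k : ℕ =>
      (b k : ℂ) * Complex.exp (-(k * t) + Complex.I * k * θ) :=
    Summable.of_norm (by simpa only [norm_circleSeries_term hb] using hs)
  refine summable_term.hasSum.congr_fun fun k => ?_
  rw [Complex.exp_add]
  push_cast
  ring_nf

theorem circleSeries_zero (b : ℕ → ℝ) (t : ℝ) : circleSeries b t 0 = expMoment b 0 t := by
  simp [circleSeries, expMoment, Complex.ofReal_tsum]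

theorem norm_le_expMoment {j : ℕ} (hb : ∀ k, 0 ≤ b k)
    (hs : Summable fun k : ℕ => b k * (k : ℝ) ^ j * exp (-((k : ℝ) * t))) {θ C : ℝ} {f : ℕ → ℂ}
    {S : ℂ} (hS : HasSum (fun k : ℕ => (b k : ℂ) * (exp (-(k * t)) : ℝ) * f k) S)
    (hf : ∀ k : ℕ, ‖f k‖ ≤ C * |k * θ| ^ j) : ‖S‖ ≤ C * |θ| ^ j * expMoment b j t := by
  refine hS.norm_le_of_bounded (hs.hasSum.mul_left (C * |θ| ^ j)) fun k => ?_
  have := hb k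
  rw [norm_mul, norm_mul, Complex.norm_real, Complex.norm_real, Real.norm_of_nonneg (hb k),
    Real.norm_of_nonneg (exp_pos _).le]
  calc b k * exp (-(k * t)) * ‖f k‖ ≤ b k * exp (-(k * t)) * (C * |k * θ| ^ j) := by
        gcongr; exact hf k
    _ = _ := by rw [abs_mul, mul_pow, Nat.abs_cast]; ring

theorem norm_circleIncrement_le (hb : ∀ k, 0 ≤ b k)
    (hs : ∀ j : ℕ, Summable fun k : ℕ => b k * (k : ℝ) ^ j * exp (-((k : ℝ) * t))) (θ : ℝ) :
    ‖circleIncrement b t θ‖ ≤ |θ| * expMoment b 1 t := by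
  have hs0 : Summable fun k : ℕ => b k * exp (-(k * t)) := by simpa using hs 0
  rw [circleIncrement, circleSeries_zero]
  have bound := norm_le_expMoment hb (hs 1) (C := 1) (θ := θ)
    (f := fun k => Complex.exp (Complex.I * (k * θ : ℝ)) - 1)
    (((hasSum_circleSeries hb hs0 θ).sub (hasSum_expMoment (hs 0))).congr_fun fun k => by ring)
    (fun k => by simpa using Real.norm_exp_I_mul_ofReal_sub_one_le (x := k * θ))
  simpa using bound

theorem norm_circleIncrement_sub_le (hb : ∀ k, 0 ≤ b k)
    (hs : ∀ j : ℕ, Summable fun k : ℕ => b k * (k : ℝ) ^ j * exp (-((k : ℝ) * t))) (θ : ℝ) :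
    ‖circleIncrement b t θ - Complex.I * θ * expMoment b 1 t‖ ≤
      3 * |θ| ^ 2 * expMoment b 2 t := by
  have hs0 : Summable fun k : ℕ => b k * exp (-(k * t)) := by simpa using hs 0
  rw [circleIncrement, circleSeries_zero]
  refine norm_le_expMoment hb (hs 2)
    ((((hasSum_circleSeries hb hs0 θ).sub (hasSum_expMoment (hs 0))).sub
      ((hasSum_expMoment (hs 1)).mul_left (Complex.I * θ))).congr_fun fun k => ?_)
    (fun k => norm_exp_I_mul_sub_one_sub_le _)
  push_cast
  ring

theorem norm_circleIncrement_sub_add_le (hb : ∀ k, 0 ≤ b k)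
    (hs : ∀ j : ℕ, Summable fun k : ℕ => b k * (k : ℝ) ^ j * exp (-((k : ℝ) * t))) (θ : ℝ) :
    ‖circleIncrement b t θ - Complex.I * θ * expMoment b 1 t +
        θ ^ 2 / 2 * expMoment b 2 t‖ ≤ 4 * |θ| ^ 3 * expMoment b 3 t := by
  have hs0 : Summable fun k : ℕ => b k * exp (-(k * t)) := by simpa using hs 0
  rw [circleIncrement, circleSeries_zero]
  refine norm_le_expMoment hb (hs 3)
    (((((hasSum_circleSeries hb hs0 θ).sub (hasSum_expMoment (hs 0))).sub
      ((hasSum_expMoment (hs 1)).mul_left (Complex.I * θ))).add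
      ((hasSum_expMoment (hs 2)).mul_left ((θ : ℂ) ^ 2 / 2))).congr_fun fun k => ?_)
    (fun k => norm_exp_I_mul_sub_one_sub_add_le _)
  push_cast
  ring

end Taylor

section Decay

/-- The loss `B(e⁻ᵗ) - Re B(e^(-t + iθ))` of the real part at angle `θ`; it controls the size of
`exp B` away from the positive real axis. -/
def circleLoss (b : ℕ → ℝ) (t θ : ℝ) : ℝ := -(circleIncrement b t θ).re

variable {b : ℕ → ℝ} {t : ℝ}

theorem hasSum_circleLoss (hb : ∀ k, 0 ≤ b k) (hs : Summable fun k : ℕ => b k * exp (-(k * t)))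
    (θ : ℝ) :
    HasSum (fun k : ℕ => b k * exp (-(k * t)) * (1 - cos (k * θ))) (circleLoss b t θ) := by
  have diff := (Complex.hasSum_re ((hasSum_circleSeries hb hs θ).sub
    (hasSum_circleSeries hb hs 0))).neg
  refine diff.congr_fun fun k => ?_
  rw [← Complex.ofReal_mul, Complex.sub_re, Complex.re_ofReal_mul, Complex.re_ofReal_mul,
    mul_comm Complex.I, mul_comm Complex.I, Complex.exp_ofReal_mul_I_re,
    Complex.exp_ofReal_mul_I_re, mul_zero, cos_zero]
  ring

theorem circleLoss_nonneg (hb : ∀ k, 0 ≤ b k) (hs : Summable fun k : ℕ => b k * exp (-(k * t)))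
    (θ : ℝ) : 0 ≤ circleLoss b t θ :=
  (hasSum_circleLoss hb hs θ).nonneg fun k =>
    mul_nonneg (mul_nonneg (hb k) (exp_pos _).le) (sub_nonneg.2 (cos_le_one _))

theorem hasSum_geometric_loss (ht : 0 < t) (θ : ℝ) (m : ℕ) :
    HasSum (fun k : ℕ => exp (-((k + m : ℕ) * t)) * (1 - cos ((k + m : ℕ) * θ)))
      (exp (-(m * t)) * (1 - exp (-t))⁻¹ -
        (Complex.exp (m * (-t + θ * Complex.I)) *
          (1 - Complex.exp (-t + θ * Complex.I))⁻¹).re) := by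
  have norm_lt_one : ‖Complex.exp (-t + θ * Complex.I)‖ < 1 := by
    rw [Complex.norm_exp]; simpa using ht
  have complex_series := (hasSum_geometric_of_norm_lt_one norm_lt_one).mul_left
    (Complex.exp (m * (-t + θ * Complex.I)))
  have real_series := (hasSum_geometric_of_lt_one (exp_pos (-t)).le
    (Real.exp_lt_one_iff.2 (neg_lt_zero.2 ht))).mul_left (exp (-(m * t)))
  refine (real_series.sub (Complex.hasSum_re complex_series)).congr_fun fun k => ?_
  have arg_re : (m * (-t + θ * Complex.I) + k * (-t + θ * Complex.I) : ℂ).re =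
      -((k + m : ℕ) * t) := by simp; ring
  have arg_im : (m * (-t + θ * Complex.I) + k * (-t + θ * Complex.I) : ℂ).im =
      (k + m : ℕ) * θ := by simp; ring
  rw [← Complex.exp_nat_mul, ← Complex.exp_add, ← Real.exp_nat_mul, ← Real.exp_add, Complex.exp_re,
    arg_re, arg_im, show -(m * t) + k * -t = -((k + m : ℕ) * t) by push_cast; ring]
  ring

theorem sq_norm_one_sub_exp (t θ : ℝ) :
    ‖1 - Complex.exp (-t + θ * Complex.I)‖ ^ 2 =
      (1 - exp (-t)) ^ 2 + 2 * exp (-t) * (1 - cos θ) := by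
  have exp_re : (Complex.exp (-t + θ * Complex.I)).re = exp (-t) * cos θ := by
    simp [Complex.exp_re]
  have exp_im : (Complex.exp (-t + θ * Complex.I)).im = exp (-t) * sin θ := by
    simp [Complex.exp_im]
  rw [Complex.sq_norm, Complex.normSq_apply]
  simp only [Complex.sub_re, Complex.sub_im, Complex.one_re, Complex.one_im, exp_re, exp_im]
  linear_combination exp (-t) ^ 2 * Real.sin_sq_add_cos_sq θ

theorem sq_sub_sq_div_le_inv_sub_inv {a b : ℝ} (ha : 0 < a) (hab : a ≤ b) :
    (b ^ 2 - a ^ 2) / (2 * a * b ^ 2) ≤ a⁻¹ - b⁻¹ := by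
  have hb : 0 < b := ha.trans_le hab
  have : a⁻¹ - b⁻¹ - (b ^ 2 - a ^ 2) / (2 * a * b ^ 2) = (b - a) ^ 2 / (2 * a * b ^ 2) := by
    field_simp
    ring
  have : 0 ≤ (b - a) ^ 2 / (2 * a * b ^ 2) := by positivity
  linarith

theorem mul_sq_le_exp_mul_one_sub_cos (ht1 : t ≤ 1) {θ : ℝ} (hθ : |θ| ≤ π) :
    4 * exp (-1) / π ^ 2 * θ ^ 2 ≤ 2 * exp (-t) * (1 - cos θ) := by
  have cos_le := Real.cos_le_one_sub_mul_cos_sq hθ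
  calc 4 * exp (-1) / π ^ 2 * θ ^ 2 = 2 * exp (-1) * (2 / π ^ 2 * θ ^ 2) := by ring
    _ ≤ 2 * exp (-t) * (1 - cos θ) := by gcongr; linarith

theorem le_inv_sub_inv_norm (ht : 0 < t) (ht1 : t ≤ 1) {θ : ℝ} (hθ : |θ| ≤ π) :
    2 * exp (-1) / π ^ 2 * (1 / t) * (θ ^ 2 / (t ^ 2 + θ ^ 2)) ≤
      (1 - exp (-t))⁻¹ - ‖1 - Complex.exp (-t + θ * Complex.I)‖⁻¹ := by
  have sq_norm := sq_norm_one_sub_exp t θ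
  have gap_le := mul_sq_le_exp_mul_one_sub_cos ht1 hθ
  set gap := 2 * exp (-t) * (1 - cos θ)
  set r := 1 - exp (-t)
  set s := ‖1 - Complex.exp (-t + θ * Complex.I)‖
  set c := 4 * exp (-1) / π ^ 2 with hc
  have c_le_one : c ≤ 1 := by
    have : exp (-1) ≤ 1 := Real.exp_le_one_iff.2 (by norm_num)
    rw [hc, div_le_one (by positivity)]
    nlinarith [Real.pi_gt_three]
  have gap_nonneg : 0 ≤ gap := le_trans (by positivity) gap_le
  have r_pos : 0 < r := sub_pos.2 (Real.exp_lt_one_iff.2 (neg_lt_zero.2 ht))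
  have r_le : r ≤ t := by linarith [Real.one_sub_le_exp_neg t]
  have r_le_s : r ≤ s := le_of_sq_le_sq (by linarith) (norm_nonneg _)
  have : 0 < s := r_pos.trans_le r_le_s
  have : 0 < c := by positivity
  have ratio_le : c * (θ ^ 2 / (t ^ 2 + θ ^ 2)) ≤ gap / s ^ 2 := by
    rw [sq_norm, ← mul_div_assoc, div_le_div_iff₀ (by positivity) (by positivity)]
    have : c * θ ^ 2 * r ^ 2 ≤ gap * t ^ 2 := by gcongr
    have : c * (θ ^ 2 * gap) ≤ 1 * (θ ^ 2 * gap) := by gcongr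
    nlinarith
  calc _ = 1 / (2 * t) * (c * (θ ^ 2 / (t ^ 2 + θ ^ 2))) := by rw [hc]; field_simp; ring
    _ ≤ 1 / (2 * r) * (gap / s ^ 2) := by gcongr
    _ = (s ^ 2 - r ^ 2) / (2 * r * s ^ 2) := by rw [sq_norm]; field_simp; ring
    _ ≤ _ := sq_sub_sq_div_le_inv_sub_inv r_pos r_le_s

-- Only the terms with `k ≥ m := ⌈1 / t⌉` are kept: there `b k ≥ a * (1 / t) ^ p`, which leaves a
-- geometric series.
theorem geometric_loss_le_circleLoss (hb : ∀ k, 0 ≤ b k)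
    (hs : Summable fun k : ℕ => b k * exp (-(k * t))) (ht : 0 < t) {a : ℝ} (ha : 0 < a) {p : ℕ}
    (hlower : ∀ k : ℕ, k ≠ 0 → a * (k : ℝ) ^ p ≤ b k) (θ : ℝ) :
    a * (1 / t) ^ p * (exp (-(⌈1 / t⌉₊ * t)) *
      ((1 - exp (-t))⁻¹ - ‖1 - Complex.exp (-t + θ * Complex.I)‖⁻¹)) ≤ circleLoss b t θ := by
  have one_sub_cos_nonneg (y : ℝ) : 0 ≤ 1 - cos y := sub_nonneg.2 (Real.cos_le_one y)
  set m := ⌈1 / t⌉₊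
  have le_m : 1 / t ≤ m := Nat.le_ceil _
  have m_pos : 0 < m := Nat.ceil_pos.2 (by positivity)
  have tail := (hasSum_geometric_loss ht θ m).mul_left (a * (1 / t) ^ p)
  have loss := hasSum_circleLoss hb hs θ
  calc _ ≤ a * (1 / t) ^ p * (exp (-(m * t)) * (1 - exp (-t))⁻¹ - (Complex.exp
        (m * (-t + θ * Complex.I)) * (1 - Complex.exp (-t + θ * Complex.I))⁻¹).re) := by
        have re_le := Complex.re_le_norm (Complex.exp (m * (-t + θ * Complex.I)) *
          (1 - Complex.exp (-t + θ * Complex.I))⁻¹)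
        have norm_exp : ‖Complex.exp (m * (-t + θ * Complex.I))‖ = exp (-(m * t)) := by
          simp [Complex.norm_exp]
        rw [norm_mul, norm_inv, norm_exp] at re_le
        gcongr
        linarith
    _ = ∑' k : ℕ, _ := tail.tsum_eq.symm
    _ ≤ ∑' k : ℕ, _ := ?_
    _ = _ := loss.tsum_eq
  refine Summable.tsum_le_tsum_of_inj (fun k => k + m) (add_left_injective m) (fun k _ => ?_)
    (fun k => ?_) tail.summable loss.summable
  · exact mul_nonneg (mul_nonneg (hb k) (exp_pos _).le) (one_sub_cos_nonneg _)
  · have coeff_le : a * (1 / t) ^ p ≤ b (k + m) := by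
      refine le_trans ?_ (hlower (k + m) (by lia))
      gcongr
      push_cast
      linarith [(Nat.cast_nonneg k : (0 : ℝ) ≤ k)]
    rw [← mul_assoc]
    gcongr
    exact one_sub_cos_nonneg _

theorem le_circleLoss (hb : ∀ k, 0 ≤ b k)
    (hs : Summable fun k : ℕ => b k * exp (-(k * t))) (ht : 0 < t) (ht1 : t ≤ 1) {a : ℝ}
    (ha : 0 < a) {p : ℕ} (hlower : ∀ k : ℕ, k ≠ 0 → a * (k : ℝ) ^ p ≤ b k) {θ : ℝ} (hθ : |θ| ≤ π) :
    a * exp (-2) * (2 * exp (-1) / π ^ 2) * (1 / t ^ (p + 1)) * (θ ^ 2 / (t ^ 2 + θ ^ 2)) ≤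
      circleLoss b t θ := by
  have ceil_mul_le : ⌈1 / t⌉₊ * t ≤ 2 := by
    calc ⌈1 / t⌉₊ * t ≤ (1 / t + 1) * t := by
          gcongr; exact (Nat.ceil_lt_add_one (by positivity)).le
      _ = 1 + t := by field_simp
      _ ≤ 2 := by linarith
  calc _ = a * (1 / t) ^ p * (exp (-2) *
        (2 * exp (-1) / π ^ 2 * (1 / t) * (θ ^ 2 / (t ^ 2 + θ ^ 2)))) := by ring
    _ ≤ a * (1 / t) ^ p * (exp (-(⌈1 / t⌉₊ * t)) *
        ((1 - exp (-t))⁻¹ - ‖1 - Complex.exp (-t + θ * Complex.I)‖⁻¹)) := by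
        gcongr
        exact le_inv_sub_inv_norm ht ht1 hθ
    _ ≤ _ := geometric_loss_le_circleLoss hb hs ht ha hlower θ

end Decay

/-! ### Asymptotics at the saddle point -/

theorem tendsto_pow_succ_nhdsGT_zero (k : ℕ) :
    Tendsto (fun t : ℝ => t ^ (k + 1)) (𝓝[>] 0) (𝓝[>] 0) := by
  refine tendsto_nhdsWithin_iff.2 ⟨tendsto_nhdsWithin_of_tendsto_nhds ?_, ?_⟩
  · exact (continuous_pow (k + 1)).tendsto' 0 0 (zero_pow k.succ_ne_zero)
  · filter_upwards [self_mem_nhdsWithin] with t ht using pow_pos (Set.mem_Ioi.1 ht) _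

theorem tendsto_atTop_of_tendsto_pow_mul {k : ℕ} {c : ℝ} (hc : 0 < c) {f : ℝ → ℝ}
    (hf : Tendsto (fun t : ℝ => t ^ (k + 1) * f t) (𝓝[>] 0) (𝓝 c)) :
    Tendsto f (𝓝[>] 0) atTop := by
  refine ((tendsto_pow_succ_nhdsGT_zero k).inv_tendsto_nhdsGT_zero.atTop_mul_pos hc hf).congr' ?_
  filter_upwards [self_mem_nhdsWithin] with t (ht : 0 < t)
  simp only [Pi.inv_apply]
  field_simp

section Domination

variable {p : ℕ} {κ v t θ V L : ℝ}

theorem sq_mul_le_of_sq_le (hκ : 0 < κ) (hv : 0 ≤ v) (ht : 0 < t)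
    (hV : V ≤ v * (1 / t ^ (p + 3)))
    (hL : κ * (1 / t ^ (p + 1)) * (θ ^ 2 / (t ^ 2 + θ ^ 2)) ≤ L) (hθ : θ ^ 2 ≤ t ^ 2) :
    θ ^ 2 * V ≤ 2 * v / κ * L := by
  calc θ ^ 2 * V ≤ θ ^ 2 * (v * (1 / t ^ (p + 3))) := by gcongr
    _ = 2 * v / κ * (κ * (1 / t ^ (p + 1)) * (θ ^ 2 / (t ^ 2 + t ^ 2))) := by field_simp; ring
    _ ≤ 2 * v / κ * (κ * (1 / t ^ (p + 1)) * (θ ^ 2 / (t ^ 2 + θ ^ 2))) := by gcongr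
    _ ≤ _ := by gcongr

theorem sq_mul_le_of_le_sq (hκ : 0 < κ) (hv : 0 ≤ v) (ht : 0 < t) (ht1 : t ≤ 1)
    (hV : V ≤ v * (1 / t ^ (p + 3)))
    (hL : κ * (1 / t ^ (p + 1)) * (θ ^ 2 / (t ^ 2 + θ ^ 2)) ≤ L) (hθ : t ^ 2 ≤ θ ^ 2)
    (hπ : |θ| ≤ π) : θ ^ 2 * V ≤ π ^ 2 * v * (2 / κ) ^ 3 * L ^ 3 := by
  have half_le : 1 / 2 ≤ θ ^ 2 / (t ^ 2 + θ ^ 2) := by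
    rw [div_le_div_iff₀ (by norm_num) (by positivity)]
    linarith
  have inv_pow_le : 1 / t ^ (p + 1) ≤ 2 / κ * L := by
    calc 1 / t ^ (p + 1) = 2 / κ * (κ * (1 / t ^ (p + 1)) * (1 / 2)) := by field_simp
      _ ≤ 2 / κ * (κ * (1 / t ^ (p + 1)) * (θ ^ 2 / (t ^ 2 + θ ^ 2))) := by gcongr
      _ ≤ _ := by gcongr
  have inv_pow_le_cube : 1 / t ^ (p + 3) ≤ (1 / t ^ (p + 1)) ^ 3 := by
    rw [one_div_pow, ← pow_mul]
    exact one_div_le_one_div_of_le (by positivity) (pow_le_pow_of_le_one ht.le ht1 (by lia))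
  calc θ ^ 2 * V ≤ θ ^ 2 * (v * (1 / t ^ (p + 3))) := by gcongr
    _ ≤ π ^ 2 * (v * (2 / κ * L) ^ 3) := by
        rw [← sq_abs θ]
        gcongr
        exact inv_pow_le_cube.trans (by gcongr)
    _ = _ := by ring

theorem one_add_sq_mul_le (hκ : 0 < κ) (hv : 0 ≤ v) (ht : 0 < t) (ht1 : t ≤ 1)
    (hV : V ≤ v * (1 / t ^ (p + 3)))
    (hL : κ * (1 / t ^ (p + 1)) * (θ ^ 2 / (t ^ 2 + θ ^ 2)) ≤ L) (hL0 : 0 ≤ L) (hπ : |θ| ≤ π) :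
    1 + θ ^ 2 * V ≤ (1 + 2 * v / κ + π ^ 2 * v * (2 / κ) ^ 3) * (1 + L) ^ 3 := by
  have one_le : 1 ≤ (1 + L) ^ 3 := one_le_pow₀ (by linarith)
  have near_nonneg : 0 ≤ 2 * v / κ * (1 + L) ^ 3 := by positivity
  have far_nonneg : 0 ≤ π ^ 2 * v * (2 / κ) ^ 3 * (1 + L) ^ 3 := by positivity
  obtain near | far := le_total (θ ^ 2) (t ^ 2)
  · have near_le : θ ^ 2 * V ≤ 2 * v / κ * (1 + L) ^ 3 := by
      refine (sq_mul_le_of_sq_le hκ hv ht hV hL near).trans ?_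
      gcongr
      nlinarith [sq_nonneg L, mul_nonneg hL0 (sq_nonneg L)]
    linarith
  · have far_le : θ ^ 2 * V ≤ π ^ 2 * v * (2 / κ) ^ 3 * (1 + L) ^ 3 := by
      refine (sq_mul_le_of_le_sq hκ hv ht ht1 hV hL far hπ).trans ?_
      gcongr
      linarith
    linarith

theorem exp_neg_mul_sq_le {C y : ℝ} (hy0 : 0 ≤ y) (hL0 : 0 ≤ L) (hy : y ≤ C * (1 + L) ^ 3) :
    exp (-L) * y ^ 2 ≤ C ^ 2 * ((6 : ℕ).factorial * exp 1) := by
  have pow_le_exp : (1 + L) ^ 6 ≤ (6 : ℕ).factorial * exp (1 + L) := by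
    rw [← div_le_iff₀' (by positivity)]
    exact Real.pow_div_factorial_le_exp (1 + L) (by linarith) 6
  calc exp (-L) * y ^ 2 ≤ exp (-L) * (C * (1 + L) ^ 3) ^ 2 := by gcongr
    _ = C ^ 2 * (exp (-L) * (1 + L) ^ 6) := by ring
    _ ≤ C ^ 2 * (exp (-L) * ((6 : ℕ).factorial * exp (1 + L))) := by gcongr
    _ = _ := by rw [Real.exp_add, Real.exp_neg]; field_simp

end Domination

/-- Coefficient sequences to which the saddle point method below applies: `b n` grows like `n ^ p`
on average, with average constant `c`, and is never much smaller than that. -/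
structure SaddleAdmissible (b : ℕ → ℝ) (p : ℕ) (c : ℝ) : Prop where
  nonneg : ∀ k, 0 ≤ b k
  map_zero : b 0 = 0
  const_pos : 0 < c
  summable : ∀ (j : ℕ) {t : ℝ}, 0 < t →
    Summable fun k : ℕ => b k * (k : ℝ) ^ j * exp (-((k : ℝ) * t))
  tendsto_expMoment : ∀ j : ℕ,
    Tendsto (fun t => t ^ (p + j + 1) * expMoment b j t) (𝓝[>] 0) (𝓝 ((p + j).factorial * c))
  exists_mul_pow_le : ∃ a > 0, ∀ k : ℕ, k ≠ 0 → a * (k : ℝ) ^ p ≤ b k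

/-- The scale `√(n t)` of the standard deviation, at the saddle point `t` belonging to the size
`n = expMoment b 1 t`. -/
def saddleScale (b : ℕ → ℝ) (t : ℝ) : ℝ := √(expMoment b 1 t * t)

namespace SaddleAdmissible

variable {b : ℕ → ℝ} {p : ℕ} {c t : ℝ}

theorem summable_exp (hb : SaddleAdmissible b p c) (ht : 0 < t) :
    Summable fun k : ℕ => b k * exp (-(k * t)) := by
  simpa using hb.summable 0 ht

theorem expMoment_pos (hb : SaddleAdmissible b p c) (j : ℕ) (ht : 0 < t) :
    0 < expMoment b j t := by
  obtain ⟨a, ha, lower⟩ := hb.exists_mul_pow_le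
  have one_pos : 0 < b 1 := ha.trans_le (by simpa using lower 1 one_ne_zero)
  refine (hb.summable j ht).tsum_pos (fun k => ?_) 1 (by simp only [Nat.cast_one]; positivity)
  have := hb.nonneg k
  positivity

theorem limit_pos (hb : SaddleAdmissible b p c) (j : ℕ) : 0 < ((p + j).factorial : ℝ) * c :=
  mul_pos (by positivity) hb.const_pos

theorem saddleScale_pos (hb : SaddleAdmissible b p c) (ht : 0 < t) : 0 < saddleScale b t :=
  Real.sqrt_pos.2 (mul_pos (hb.expMoment_pos 1 ht) ht)

theorem exists_exp_neg_circleLoss_le (hb : SaddleAdmissible b p c) :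
    ∃ C, ∀ᶠ t in 𝓝[>] (0 : ℝ), ∀ θ : ℝ, |θ| ≤ π →
      exp (-circleLoss b t θ) * (1 + θ ^ 2 * expMoment b 2 t) ^ 2 ≤ C := by
  obtain ⟨a, ha, lower⟩ := hb.exists_mul_pow_le
  have v_pos := hb.limit_pos 2
  set v : ℝ := (p + 2).factorial * c
  set κ : ℝ := a * exp (-2) * (2 * exp (-1) / π ^ 2)
  refine ⟨(1 + 2 * (2 * v) / κ + π ^ 2 * (2 * v) * (2 / κ) ^ 3) ^ 2 *
    ((6 : ℕ).factorial * exp 1), ?_⟩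
  filter_upwards [(hb.tendsto_expMoment 2).eventually_lt_const (show v < 2 * v by linarith),
    nhdsWithin_le_nhds (gt_mem_nhds one_pos), self_mem_nhdsWithin] with t moment_lt ht1 ht θ hθ
  have ht : 0 < t := ht
  have loss_nonneg := circleLoss_nonneg hb.nonneg (hb.summable_exp ht) θ
  have moment_nonneg := (hb.expMoment_pos 2 ht).le
  have moment_le : expMoment b 2 t ≤ 2 * v * (1 / t ^ (p + 3)) := by
    rw [mul_one_div, le_div_iff₀' (by positivity)]
    exact moment_lt.le
  exact exp_neg_mul_sq_le (by positivity) loss_nonneg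
    (one_add_sq_mul_le (by positivity) (by positivity) ht ht1.le moment_le
      (le_circleLoss hb.nonneg (hb.summable_exp ht) ht ht1.le ha lower hθ) loss_nonneg hθ)

theorem tendsto_expMoment_atTop (hb : SaddleAdmissible b p c) (j : ℕ) :
    Tendsto (expMoment b j) (𝓝[>] 0) atTop :=
  tendsto_atTop_of_tendsto_pow_mul (hb.limit_pos j) (hb.tendsto_expMoment j)

theorem tendsto_saddleScale_atTop (hb : SaddleAdmissible b p c) :
    Tendsto (saddleScale b) (𝓝[>] 0) atTop := by
  refine Real.tendsto_sqrt_atTop.comp (tendsto_atTop_of_tendsto_pow_mul (k := p)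
    (hb.limit_pos 1) ((hb.tendsto_expMoment 1).congr fun t => ?_))
  ring

theorem tendsto_expMoment_div (hb : SaddleAdmissible b p c) (j : ℕ) :
    Tendsto (fun t => expMoment b j t / (expMoment b (j + 1) t * t)) (𝓝[>] 0)
      (𝓝 (1 / ((p : ℝ) + j + 1))) := by
  have limit_eq : ((p + j).factorial * c) / ((p + (j + 1)).factorial * c) =
      1 / ((p : ℝ) + j + 1) := by
    have := hb.const_pos
    rw [← add_assoc, Nat.factorial_succ]
    push_cast
    field_simp
  rw [← limit_eq]
  refine ((hb.tendsto_expMoment j).div (hb.tendsto_expMoment (j + 1))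
    (hb.limit_pos _).ne').congr' ?_
  filter_upwards [self_mem_nhdsWithin] with t (ht : 0 < t)
  have := hb.expMoment_pos (j + 1) ht
  simp only [Pi.div_apply]
  field_simp
  ring

theorem tendsto_expMoment_one_div (hb : SaddleAdmissible b p c) :
    Tendsto (fun t => expMoment b 1 t / (saddleScale b t * √(expMoment b 2 t))) (𝓝[>] 0)
      (𝓝 √(1 / ((p : ℝ) + 2))) := by
  have ratio := hb.tendsto_expMoment_div 1
  rw [Nat.cast_one, add_assoc, one_add_one_eq_two (R := ℝ)] at ratio
  refine ratio.sqrt.congr' ?_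
  filter_upwards [self_mem_nhdsWithin] with t (ht : 0 < t)
  have mean_pos := hb.expMoment_pos 1 ht
  have var_pos := hb.expMoment_pos 2 ht
  have := Real.sqrt_pos.2 ht
  have := Real.sqrt_pos.2 mean_pos
  have := Real.sqrt_pos.2 var_pos
  rw [saddleScale, Real.sqrt_div mean_pos.le, Real.sqrt_mul var_pos.le, Real.sqrt_mul mean_pos.le,
    div_eq_div_iff (by positivity) (by positivity)]
  linear_combination √(expMoment b 2 t) * √t * Real.mul_self_sqrt mean_pos.le

theorem tendsto_expMoment_three_div (hb : SaddleAdmissible b p c) :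
    Tendsto (fun t => expMoment b 3 t / √(expMoment b 2 t) ^ 3) (𝓝[>] 0) (𝓝 0) := by
  have square : Tendsto (fun t => expMoment b 3 t ^ 2 / expMoment b 2 t ^ 3) (𝓝[>] 0) (𝓝 0) := by
    have normalized := (((hb.tendsto_expMoment 3).pow 2).div ((hb.tendsto_expMoment 2).pow 3)
      (pow_pos (hb.limit_pos 2) 3).ne').mul
      ((tendsto_pow_succ_nhdsGT_zero p).mono_right nhdsWithin_le_nhds)
    rw [mul_zero] at normalized
    refine normalized.congr' ?_
    filter_upwards [self_mem_nhdsWithin] with t (ht : 0 < t)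
    have := hb.expMoment_pos 2 ht
    simp only [Pi.div_apply]
    field_simp
    ring
  have root := square.sqrt
  rw [Real.sqrt_zero] at root
  refine root.congr' ?_
  filter_upwards [self_mem_nhdsWithin] with t (ht : 0 < t)
  rw [Real.sqrt_div (sq_nonneg _), Real.sqrt_sq (hb.expMoment_pos 3 ht).le]
  congr 1
  rw [Real.sqrt_eq_iff_mul_self_eq (by have := hb.expMoment_pos 2 ht; positivity) (by positivity)]
  rw [← mul_pow, Real.mul_self_sqrt (hb.expMoment_pos 2 ht).le]

end SaddleAdmissible

/-! ### The Gaussian limit of the rescaled integrals -/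

section Rescaling

/-- The integrand of `centredIntegral` in the variable `u = θ √(expMoment b 2 t)`, with the centred
series measured in units of `saddleScale`, at the saddle point of size `expMoment b 1 t`. -/
def rescaledIntegrand (b : ℕ → ℝ) (j : ℕ) (t u : ℝ) : ℂ :=
  (circleIncrement b t (u / √(expMoment b 2 t)) / saddleScale b t) ^ j *
    Complex.exp (circleIncrement b t (u / √(expMoment b 2 t)) -
      Complex.I * expMoment b 1 t * (u / √(expMoment b 2 t) : ℝ))

/-- The range of `u` in `rescaledIntegrand`, corresponding to `-π < θ ≤ π`. -/
def rescaledRange (b : ℕ → ℝ) (t : ℝ) : Set ℝ :=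
  Set.Ioc (-(π * √(expMoment b 2 t))) (π * √(expMoment b 2 t))

/-- The integral of `rescaledIntegrand` over its range. -/
def rescaledIntegral (b : ℕ → ℝ) (j : ℕ) (t : ℝ) : ℂ :=
  ∫ u, (rescaledRange b t).indicator (rescaledIntegrand b j t) u

variable {b : ℕ → ℝ} {t : ℝ}

theorem continuous_rescaledIntegrand (hb : ∀ k, 0 ≤ b k)
    (hs : Summable fun k : ℕ => b k * exp (-(k * t))) (j : ℕ) :
    Continuous (rescaledIntegrand b j t) := by
  have := continuous_circleSeries hb hs
  unfold rescaledIntegrand circleIncrement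
  fun_prop

theorem centredIntegral_eq_rescaledIntegral (hV : 0 < expMoment b 2 t) (hA : 0 < saddleScale b t)
    {n : ℕ} (hn : expMoment b 1 t = n) (j : ℕ) :
    centredIntegral b n t j =
      (1 / √(expMoment b 2 t) : ℝ) * (saddleScale b t : ℂ) ^ j * rescaledIntegral b j t := by
  have width_pos := Real.sqrt_pos.2 hV
  have width_ne : (√(expMoment b 2 t) : ℂ) ≠ 0 := by exact_mod_cast width_pos.ne'
  have scale_ne : (saddleScale b t : ℂ) ≠ 0 := by exact_mod_cast hA.ne'
  have substitute := intervalIntegral.integral_comp_div (a := -(π * √(expMoment b 2 t)))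
    (b := π * √(expMoment b 2 t)) (f := fun θ : ℝ => (circleIncrement b t θ / saddleScale b t) ^ j *
      Complex.exp (circleIncrement b t θ - Complex.I * expMoment b 1 t * θ)) width_pos.ne'
  rw [neg_div, mul_div_cancel_right₀ _ width_pos.ne', Complex.real_smul] at substitute
  have unscale : centredIntegral b n t j = (saddleScale b t : ℂ) ^ j *
      ∫ θ in (-π)..π, (circleIncrement b t θ / saddleScale b t) ^ j *
        Complex.exp (circleIncrement b t θ - Complex.I * expMoment b 1 t * θ) := by
    rw [← intervalIntegral.integral_const_mul, centredIntegral]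
    congr 1 with θ
    rw [hn, div_pow, Complex.ofReal_natCast]
    field_simp
  have range_le : -(π * √(expMoment b 2 t)) ≤ π * √(expMoment b 2 t) := by
    linarith [mul_pos Real.pi_pos width_pos]
  rw [rescaledIntegral, rescaledRange, MeasureTheory.integral_indicator measurableSet_Ioc,
    ← intervalIntegral.integral_of_le range_le]
  simp only [rescaledIntegrand]
  rw [substitute, unscale]
  push_cast
  field_simp

theorem div_sqrt_sq_mul {V : ℝ} (hV : 0 < V) (u : ℝ) : (u / √V) ^ 2 * V = u ^ 2 := by
  rw [div_pow, Real.sq_sqrt hV.le, div_mul_cancel₀ _ hV.ne']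

theorem abs_div_le_pi_of_mem_rescaledRange (hV : 0 < expMoment b 2 t) {u : ℝ}
    (hu : u ∈ rescaledRange b t) : |u / √(expMoment b 2 t)| ≤ π := by
  have width_pos := Real.sqrt_pos.2 hV
  rw [abs_div, abs_of_pos width_pos, div_le_iff₀ width_pos, abs_le]
  exact ⟨hu.1.le, hu.2⟩

theorem norm_rescaledIntegrand (hA : 0 < saddleScale b t) (j : ℕ) (u : ℝ) :
    ‖rescaledIntegrand b j t u‖ =
      (‖circleIncrement b t (u / √(expMoment b 2 t))‖ / saddleScale b t) ^ j *
        exp (-circleLoss b t (u / √(expMoment b 2 t))) := by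
  rw [rescaledIntegrand, norm_mul, norm_pow, norm_div, Complex.norm_real,
    Real.norm_of_nonneg hA.le, Complex.norm_exp, circleLoss, neg_neg, Complex.sub_re]
  simp

theorem pow_le_one_add_sq {j : ℕ} (hj : j ≤ 2) (u : ℝ) : |u| ^ j ≤ 1 + u ^ 2 := by
  rw [← sq_abs u]
  interval_cases j
  · simp only [pow_zero, sq_abs, le_add_iff_nonneg_right]
    positivity
  · nlinarith [sq_nonneg (|u| - 1), abs_nonneg u]
  · simp

end Rescaling

namespace SaddleAdmissible

variable {b : ℕ → ℝ} {p : ℕ} {c t : ℝ}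

theorem norm_circleIncrement_div_le (hb : SaddleAdmissible b p c) (ht : 0 < t)
    (ratio : expMoment b 1 t / (saddleScale b t * √(expMoment b 2 t)) ≤ 1) (u : ℝ) :
    ‖circleIncrement b t (u / √(expMoment b 2 t))‖ / saddleScale b t ≤ |u| := by
  have scale_pos := hb.saddleScale_pos ht
  have width_pos := Real.sqrt_pos.2 (hb.expMoment_pos 2 ht)
  calc ‖circleIncrement b t (u / √(expMoment b 2 t))‖ / saddleScale b t
      ≤ |u / √(expMoment b 2 t)| * expMoment b 1 t / saddleScale b t := by
        gcongr
        exact norm_circleIncrement_le hb.nonneg (fun j => hb.summable j ht) _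
    _ = |u| * (expMoment b 1 t / (saddleScale b t * √(expMoment b 2 t))) := by
        rw [abs_div, abs_of_pos width_pos]
        field_simp
    _ ≤ |u| := mul_le_of_le_one_right (abs_nonneg u) ratio

theorem exists_norm_indicator_rescaledIntegrand_le (hb : SaddleAdmissible b p c) {j : ℕ}
    (hj : j ≤ 2) :
    ∃ C : ℝ, ∀ᶠ t in 𝓝[>] (0 : ℝ), ∀ u : ℝ,
      ‖(rescaledRange b t).indicator (rescaledIntegrand b j t) u‖ ≤ C * (1 + u ^ 2)⁻¹ := by
  obtain ⟨C, dominated⟩ := hb.exists_exp_neg_circleLoss_le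
  have limit_lt_one : √(1 / ((p : ℝ) + 2)) < 1 := by
    rw [Real.sqrt_lt' one_pos, div_lt_iff₀ (by positivity)]
    linarith [(Nat.cast_nonneg p : (0 : ℝ) ≤ p)]
  refine ⟨C, ?_⟩
  filter_upwards [dominated, hb.tendsto_expMoment_one_div.eventually_lt_const limit_lt_one,
    self_mem_nhdsWithin] with t dominated ratio (ht : 0 < t) u
  have var_pos := hb.expMoment_pos 2 ht
  by_cases hu : u ∈ rescaledRange b t
  · have loss_le := dominated _ (abs_div_le_pi_of_mem_rescaledRange var_pos hu)
    rw [div_sqrt_sq_mul var_pos] at loss_le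
    rw [Set.indicator_of_mem hu, norm_rescaledIntegrand (hb.saddleScale_pos ht), ← div_eq_mul_inv,
      le_div_iff₀ (by positivity)]
    set L := circleLoss b t (u / √(expMoment b 2 t))
    have scale_pos := hb.saddleScale_pos ht
    calc _ ≤ |u| ^ j * exp (-L) * (1 + u ^ 2) := by
          gcongr
          exact hb.norm_circleIncrement_div_le ht ratio.le u
      _ ≤ (1 + u ^ 2) * exp (-L) * (1 + u ^ 2) := by gcongr; exact pow_le_one_add_sq hj u
      _ = exp (-L) * (1 + u ^ 2) ^ 2 := by ring
      _ ≤ C := loss_le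
  · have C_nonneg : 0 ≤ C := le_trans (by positivity) (dominated 0 (by simp [Real.pi_pos.le]))
    rw [Set.indicator_of_notMem hu, norm_zero]
    positivity

theorem tendsto_circleIncrement_div (hb : SaddleAdmissible b p c) (u : ℝ) :
    Tendsto (fun t => circleIncrement b t (u / √(expMoment b 2 t)) / saddleScale b t) (𝓝[>] 0)
      (𝓝 (Complex.I * u * √(1 / ((p : ℝ) + 2)))) := by
  have leading : Tendsto (fun t => Complex.I * u *
      ((expMoment b 1 t / (saddleScale b t * √(expMoment b 2 t)) : ℝ) : ℂ)) (𝓝[>] 0)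
      (𝓝 (Complex.I * u * √(1 / ((p : ℝ) + 2)))) :=
    hb.tendsto_expMoment_one_div.ofReal.const_mul _
  have error : Tendsto (fun t => circleIncrement b t (u / √(expMoment b 2 t)) / saddleScale b t -
      Complex.I * u * ((expMoment b 1 t / (saddleScale b t * √(expMoment b 2 t)) : ℝ) : ℂ))
      (𝓝[>] 0) (𝓝 0) := by
    refine squeeze_zero_norm' ?_ (hb.tendsto_saddleScale_atTop.const_div_atTop (3 * u ^ 2))
    filter_upwards [self_mem_nhdsWithin] with t (ht : 0 < t)
    have var_pos := hb.expMoment_pos 2 ht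
    have scale_pos := hb.saddleScale_pos ht
    set θ := u / √(expMoment b 2 t) with hθ
    have factor : circleIncrement b t θ / saddleScale b t - Complex.I * u *
        ((expMoment b 1 t / (saddleScale b t * √(expMoment b 2 t)) : ℝ) : ℂ) =
        (circleIncrement b t θ - Complex.I * θ * expMoment b 1 t) / saddleScale b t := by
      rw [hθ]
      push_cast
      ring
    have taylor := norm_circleIncrement_sub_le hb.nonneg (fun j => hb.summable j ht) θ
    rw [sq_abs, mul_assoc (3 : ℝ), hθ, div_sqrt_sq_mul var_pos, ← hθ] at taylor
    rw [factor, norm_div, Complex.norm_real, Real.norm_of_nonneg scale_pos.le]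
    gcongr
  simpa using error.add leading

theorem tendsto_circleIncrement_sub (hb : SaddleAdmissible b p c) (u : ℝ) :
    Tendsto (fun t => circleIncrement b t (u / √(expMoment b 2 t)) -
      Complex.I * expMoment b 1 t * (u / √(expMoment b 2 t) : ℝ)) (𝓝[>] 0)
      (𝓝 (-(u : ℂ) ^ 2 / 2)) := by
  rw [← tendsto_sub_nhds_zero_iff]
  have cubic := hb.tendsto_expMoment_three_div.const_mul (4 * |u| ^ 3)
  rw [mul_zero] at cubic
  refine squeeze_zero_norm' ?_ cubic
  filter_upwards [self_mem_nhdsWithin] with t (ht : 0 < t)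
  have var_pos := hb.expMoment_pos 2 ht
  set θ := u / √(expMoment b 2 t) with hθ
  have sq_eq : (u : ℂ) ^ 2 = θ ^ 2 * expMoment b 2 t := by
    exact_mod_cast (div_sqrt_sq_mul var_pos u).symm
  have taylor := norm_circleIncrement_sub_add_le hb.nonneg (fun j => hb.summable j ht) θ
  calc _ = ‖circleIncrement b t θ - Complex.I * θ * expMoment b 1 t +
        θ ^ 2 / 2 * expMoment b 2 t‖ := by rw [sq_eq]; ring_nf
    _ ≤ _ := taylor
    _ = _ := by
        rw [hθ, abs_div, abs_of_pos (Real.sqrt_pos.2 var_pos), div_pow]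
        ring

theorem tendsto_indicator_rescaledIntegrand (hb : SaddleAdmissible b p c) (j : ℕ) (u : ℝ) :
    Tendsto (fun t => (rescaledRange b t).indicator (rescaledIntegrand b j t) u) (𝓝[>] 0)
      (𝓝 ((Complex.I * u * √(1 / ((p : ℝ) + 2))) ^ j * Complex.exp (-(u : ℂ) ^ 2 / 2))) := by
  have width_atTop : Tendsto (fun t => √(expMoment b 2 t)) (𝓝[>] 0) atTop :=
    Real.tendsto_sqrt_atTop.comp (hb.tendsto_expMoment_atTop 2)
  refine (((hb.tendsto_circleIncrement_div u).pow j).mul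
    (hb.tendsto_circleIncrement_sub u).cexp).congr' ?_
  filter_upwards [width_atTop.eventually (eventually_gt_atTop (|u| / π))] with t width_gt
  rw [div_lt_iff₀' Real.pi_pos, abs_lt] at width_gt
  have mem : u ∈ rescaledRange b t := ⟨width_gt.1, width_gt.2.le⟩
  rw [Set.indicator_of_mem mem, rescaledIntegrand]

theorem tendsto_rescaledIntegral (hb : SaddleAdmissible b p c) {j : ℕ} (hj : j ≤ 2) :
    Tendsto (rescaledIntegral b j) (𝓝[>] 0)
      (𝓝 (∫ u : ℝ, (Complex.I * u * √(1 / ((p : ℝ) + 2))) ^ j *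
        Complex.exp (-(u : ℂ) ^ 2 / 2))) := by
  obtain ⟨C, bound⟩ := hb.exists_norm_indicator_rescaledIntegrand_le hj
  refine tendsto_integral_filter_of_dominated_convergence (fun u => C * (1 + u ^ 2)⁻¹) ?_ ?_
    (integrable_inv_one_add_sq.const_mul C)
    (ae_of_all _ fun u => hb.tendsto_indicator_rescaledIntegrand j u)
  · filter_upwards [self_mem_nhdsWithin] with t (ht : 0 < t)
    exact (continuous_rescaledIntegrand hb.nonneg (hb.summable_exp ht)
      j).aestronglyMeasurable.indicator measurableSet_Ioc
  · filter_upwards [bound] with t bound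
    exact ae_of_all _ bound

end SaddleAdmissible

section GaussianMoments

theorem integral_exp_neg_sq_div_two : ∫ u : ℝ, exp (-u ^ 2 / 2) = √(2 * π) := by
  have gaussian := integral_gaussian (1 / 2)
  rw [show π / (1 / 2) = 2 * π by ring] at gaussian
  rw [← gaussian]
  congr 1 with u
  ring_nf

theorem integrable_pow_mul_exp_neg_sq_div_two (j : ℕ) :
    Integrable fun u : ℝ => u ^ j * exp (-u ^ 2 / 2) := by
  refine (integrable_rpow_mul_exp_neg_mul_sq (b := 1 / 2) (by norm_num) (s := j)
    (by linarith [(Nat.cast_nonneg j : (0 : ℝ) ≤ j)])).congr (ae_of_all _ fun u => ?_)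
  simp only [Real.rpow_natCast]
  ring_nf

theorem hasDerivAt_exp_neg_sq_div_two (u : ℝ) :
    HasDerivAt (fun u : ℝ => exp (-u ^ 2 / 2)) (-(u * exp (-u ^ 2 / 2))) u := by
  refine (((hasDerivAt_pow 2 u).neg.div_const 2).exp).congr_deriv ?_
  simp
  ring

theorem integral_mul_exp_neg_sq_div_two : ∫ u : ℝ, u * exp (-u ^ 2 / 2) = 0 := by
  have := integral_eq_zero_of_hasDerivAt_of_integrable hasDerivAt_exp_neg_sq_div_two
    (by simpa using (integrable_pow_mul_exp_neg_sq_div_two 1).neg)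
    (by simpa using integrable_pow_mul_exp_neg_sq_div_two 0)
  rwa [integral_neg, neg_eq_zero] at this

theorem integral_sq_mul_exp_neg_sq_div_two : ∫ u : ℝ, u ^ 2 * exp (-u ^ 2 / 2) = √(2 * π) := by
  have integrable_zero : Integrable fun u : ℝ => exp (-u ^ 2 / 2) := by
    simpa using integrable_pow_mul_exp_neg_sq_div_two 0
  have integrable_two := integrable_pow_mul_exp_neg_sq_div_two 2
  have deriv (u : ℝ) : HasDerivAt (fun u : ℝ => u * exp (-u ^ 2 / 2))
      (exp (-u ^ 2 / 2) - u ^ 2 * exp (-u ^ 2 / 2)) u := by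
    refine ((hasDerivAt_id u).mul (hasDerivAt_exp_neg_sq_div_two u)).congr_deriv ?_
    simp
    ring
  have by_parts := integral_eq_zero_of_hasDerivAt_of_integrable deriv
    (integrable_zero.sub integrable_two) (by simpa using integrable_pow_mul_exp_neg_sq_div_two 1)
  rw [integral_sub integrable_zero integrable_two, integral_exp_neg_sq_div_two] at by_parts
  linarith

theorem integral_I_mul_pow_mul_exp (c : ℝ) (j : ℕ) :
    ∫ u : ℝ, (Complex.I * u * c) ^ j * Complex.exp (-(u : ℂ) ^ 2 / 2) =
      (Complex.I * c) ^ j * ((∫ u : ℝ, u ^ j * exp (-u ^ 2 / 2) : ℝ) : ℂ) := by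
  rw [← integral_complex_ofReal, ← integral_const_mul]
  congr 1 with u
  push_cast
  ring

end GaussianMoments

/-! ### The variance at the saddle point -/

/-- `componentVariance b n / (n t)` at the saddle point `n = expMoment b 1 t`, expressed through the
rescaled integrals. -/
def normalizedVariance (b : ℕ → ℝ) (t : ℝ) : ℂ :=
  rescaledIntegral b 2 t / rescaledIntegral b 0 t +
    (1 / saddleScale b t : ℝ) * (rescaledIntegral b 1 t / rescaledIntegral b 0 t) +
    (expMoment b 0 t / (expMoment b 1 t * t) : ℝ) -
    (rescaledIntegral b 1 t / rescaledIntegral b 0 t) ^ 2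

theorem sqrt_two_pi_ne_zero : (√(2 * π) : ℂ) ≠ 0 := by
  exact_mod_cast (Real.sqrt_pos.2 Real.two_pi_pos).ne'

theorem componentVariance_eq_normalizedVariance {b : ℕ → ℝ} {t : ℝ} (hb : ∀ k, 0 ≤ b k)
    (hb0 : b 0 = 0) (hs : Summable fun k : ℕ => b k * exp (-(k * t))) (hV : 0 < expMoment b 2 t)
    (hA : 0 < saddleScale b t) (h0 : rescaledIntegral b 0 t ≠ 0) {n : ℕ}
    (hn : expMoment b 1 t = n) :
    componentVariance b n = n * t * (normalizedVariance b t).re := by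
  have scale_ne : (saddleScale b t : ℂ) ≠ 0 := by exact_mod_cast hA.ne'
  have width_ne : (√(expMoment b 2 t) : ℂ) ≠ 0 := by exact_mod_cast (Real.sqrt_pos.2 hV).ne'
  have scale_sq : (saddleScale b t : ℂ) ^ 2 = n * t := by
    have := Real.sq_sqrt (Real.sqrt_pos.1 hA).le
    rw [hn] at this
    rw [saddleScale, hn]
    exact_mod_cast this
  have rescale := centredIntegral_eq_rescaledIntegral hV hA hn
  have centred_ne : centredIntegral b n t 0 ≠ 0 := by
    rw [rescale]
    simp [h0, width_ne]
  have scaled : (componentVariance b n : ℂ) = ((n * t : ℝ) : ℂ) * normalizedVariance b t := by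
    rw [componentVariance_eq_centredIntegral hb hb0 hs centred_ne, rescale, rescale, rescale,
      circleSeries_zero, normalizedVariance, hn]
    push_cast
    rw [← scale_sq]
    field_simp
  simpa only [Complex.ofReal_re, Complex.re_ofReal_mul] using congrArg Complex.re scaled

namespace SaddleAdmissible

variable {b : ℕ → ℝ} {p : ℕ} {c : ℝ}

theorem tendsto_rescaledIntegral_zero (hb : SaddleAdmissible b p c) :
    Tendsto (rescaledIntegral b 0) (𝓝[>] 0) (𝓝 √(2 * π)) := by
  have limit := hb.tendsto_rescaledIntegral zero_le_two
  rw [integral_I_mul_pow_mul_exp] at limit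
  simpa only [pow_zero, one_mul, integral_exp_neg_sq_div_two] using limit

theorem tendsto_rescaledIntegral_one (hb : SaddleAdmissible b p c) :
    Tendsto (rescaledIntegral b 1) (𝓝[>] 0) (𝓝 0) := by
  have limit := hb.tendsto_rescaledIntegral one_le_two
  rw [integral_I_mul_pow_mul_exp] at limit
  simpa only [pow_one, integral_mul_exp_neg_sq_div_two, Complex.ofReal_zero, mul_zero] using limit

theorem tendsto_rescaledIntegral_two (hb : SaddleAdmissible b p c) :
    Tendsto (rescaledIntegral b 2) (𝓝[>] 0) (𝓝 (-(1 / ((p : ℂ) + 2)) * √(2 * π))) := by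
  have sqrt_sq : (√(1 / ((p : ℝ) + 2)) : ℂ) ^ 2 = 1 / ((p : ℂ) + 2) := by
    rw [← Complex.ofReal_pow, Real.sq_sqrt (by positivity)]
    push_cast
    rfl
  have limit := hb.tendsto_rescaledIntegral le_rfl
  rw [integral_I_mul_pow_mul_exp] at limit
  simpa only [mul_pow, Complex.I_sq, sqrt_sq, neg_one_mul, integral_sq_mul_exp_neg_sq_div_two]
    using limit

theorem tendsto_normalizedVariance (hb : SaddleAdmissible b p c) :
    Tendsto (normalizedVariance b) (𝓝[>] 0) (𝓝 (1 / (((p : ℂ) + 2) * (p + 1)))) := by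
  have sqrt_ne := sqrt_two_pi_ne_zero
  have mean := hb.tendsto_rescaledIntegral_one.div hb.tendsto_rescaledIntegral_zero sqrt_ne
  have second := hb.tendsto_rescaledIntegral_two.div hb.tendsto_rescaledIntegral_zero sqrt_ne
  have inv_scale := (hb.tendsto_saddleScale_atTop.const_div_atTop 1).ofReal
  have poisson := (hb.tendsto_expMoment_div 0).ofReal
  have limit_eq : -(1 / ((p : ℂ) + 2)) * √(2 * π) / √(2 * π) + (0 : ℝ) * (0 / √(2 * π)) +
      (1 / ((p : ℝ) + (0 : ℕ) + 1) : ℝ) - (0 / √(2 * π)) ^ 2 = 1 / (((p : ℂ) + 2) * (p + 1)) := by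
    have : (p : ℂ) + 1 ≠ 0 := by exact_mod_cast p.succ_ne_zero
    have : (p : ℂ) + 2 ≠ 0 := by exact_mod_cast (p + 1).succ_ne_zero
    push_cast
    field_simp
    ring
  rw [← limit_eq]
  exact ((second.add (inv_scale.mul mean)).add poisson).sub (mean.pow 2)

theorem tendsto_re_normalizedVariance (hb : SaddleAdmissible b p c) :
    Tendsto (fun t => (normalizedVariance b t).re) (𝓝[>] 0)
      (𝓝 (1 / (((p : ℝ) + 2) * (p + 1)))) := by
  have limit_re : (1 / (((p : ℂ) + 2) * (p + 1))).re = 1 / (((p : ℝ) + 2) * (p + 1)) := by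
    rw [← Complex.ofReal_re (1 / (((p : ℝ) + 2) * (p + 1)))]
    push_cast
    rfl
  exact limit_re ▸ (Complex.continuous_re.tendsto _).comp hb.tendsto_normalizedVariance

theorem eventually_componentVariance_eq (hb : SaddleAdmissible b p c) :
    ∀ᶠ t in 𝓝[>] (0 : ℝ), ∀ n : ℕ, expMoment b 1 t = n →
      componentVariance b n = n * t * (normalizedVariance b t).re := by
  filter_upwards [hb.tendsto_rescaledIntegral_zero.eventually_ne sqrt_two_pi_ne_zero,
    self_mem_nhdsWithin] with t integral_ne (ht : 0 < t) n hn
  exact componentVariance_eq_normalizedVariance hb.nonneg hb.map_zero (hb.summable_exp ht)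
    (hb.expMoment_pos 2 ht) (hb.saddleScale_pos ht) integral_ne hn

theorem antitoneOn_expMoment (hb : SaddleAdmissible b p c) (j : ℕ) :
    AntitoneOn (expMoment b j) (Set.Ioi 0) := by
  intro s hs t ht hst
  refine (hb.summable j ht).tsum_le_tsum (fun k => ?_) (hb.summable j hs)
  have := hb.nonneg k
  gcongr

theorem continuousOn_expMoment (hb : SaddleAdmissible b p c) (j : ℕ) {a : ℝ} (ha : 0 < a) :
    ContinuousOn (expMoment b j) (Set.Ici a) := by
  refine continuousOn_tsum (fun k => by fun_prop) (hb.summable j ha) fun k t (ht : a ≤ t) => ?_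
  have := hb.nonneg k
  rw [Real.norm_of_nonneg (by positivity)]
  gcongr

theorem exists_expMoment_eq (hb : SaddleAdmissible b p c) (j : ℕ) {y : ℝ}
    (hy : expMoment b j 1 ≤ y) : ∃ t > 0, expMoment b j t = y := by
  obtain ⟨a, ⟨le_moment, a_lt_one⟩, (a_pos : 0 < a)⟩ :=
    ((((hb.tendsto_expMoment_atTop j).eventually_ge_atTop y).and
      (nhdsWithin_le_nhds (gt_mem_nhds one_pos))).and self_mem_nhdsWithin).exists
  obtain ⟨t, ht, moment_eq⟩ := intermediate_value_Icc' a_lt_one.le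
    ((hb.continuousOn_expMoment j a_pos).mono Set.Icc_subset_Ici_self) ⟨hy, le_moment⟩
  exact ⟨t, a_pos.trans_le ht.1, moment_eq⟩

theorem exists_tendsto_expMoment_eq (hb : SaddleAdmissible b p c) (j : ℕ) :
    ∃ τ : ℕ → ℝ, Tendsto τ atTop (𝓝[>] 0) ∧ ∀ᶠ n : ℕ in atTop, expMoment b j (τ n) = n := by
  have solvable (n : ℕ) : ∃ t > 0, expMoment b j 1 ≤ n → expMoment b j t = n := by
    by_cases h : expMoment b j 1 ≤ n
    · obtain ⟨t, ht, moment_eq⟩ := hb.exists_expMoment_eq j h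
      exact ⟨t, ht, fun _ => moment_eq⟩
    · exact ⟨1, one_pos, fun h' => absurd h' h⟩
  choose τ τ_pos moment_eq using solvable
  have eventually_eq : ∀ᶠ n : ℕ in atTop, expMoment b j (τ n) = n :=
    (tendsto_natCast_atTop_atTop.eventually_ge_atTop (expMoment b j 1)).mono moment_eq
  refine ⟨τ, tendsto_nhdsWithin_iff.2 ⟨tendsto_order.2 ⟨fun a ha => ?_, fun ε hε => ?_⟩,
    Eventually.of_forall τ_pos⟩, eventually_eq⟩
  · exact Eventually.of_forall fun n => ha.trans (τ_pos n)
  · filter_upwards [eventually_eq,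
      tendsto_natCast_atTop_atTop.eventually_gt_atTop (expMoment b j ε)] with n eq_n gt_n
    by_contra! le_τ
    exact (hb.antitoneOn_expMoment j hε (τ_pos n) le_τ).not_gt (eq_n ▸ gt_n)

theorem tendsto_natCast_mul_pow (hb : SaddleAdmissible b p c) {τ : ℕ → ℝ}
    (hτ : Tendsto τ atTop (𝓝[>] 0)) (moment_eq : ∀ᶠ n : ℕ in atTop, expMoment b 1 (τ n) = n) :
    Tendsto (fun n : ℕ => n * τ n ^ (p + 2)) atTop (𝓝 ((p + 1).factorial * c)) := by
  refine ((hb.tendsto_expMoment 1).comp hτ).congr' ?_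
  filter_upwards [moment_eq] with n moment_eq
  rw [Function.comp_apply, moment_eq, mul_comm]

end SaddleAdmissible

theorem rpow_inv_mul_rpow_sub_one_div {y t : ℝ} (hy : 0 < y) (ht : 0 ≤ t) {m : ℕ} (hm : m ≠ 0) :
    (y * t ^ m) ^ (1 / (m : ℝ)) * y ^ (((m : ℝ) - 1) / m) = y * t := by
  have exponent : (m : ℝ)⁻¹ + ((m : ℝ) - 1) / m = 1 := by field_simp; ring
  rw [Real.mul_rpow hy.le (pow_nonneg ht m), one_div, Real.pow_rpow_inv_natCast ht hm,
    mul_right_comm, ← Real.rpow_add hy, exponent, Real.rpow_one]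

theorem SaddleAdmissible.tendsto_componentVariance_div {b : ℕ → ℝ} {p : ℕ} {c : ℝ}
    (hb : SaddleAdmissible b p c) :
    Tendsto (fun n : ℕ => componentVariance b n /
        (((p + 1).factorial * c) ^ (1 / ((p + 2 : ℕ) : ℝ)) /
            (((p + 2 : ℕ) : ℝ) * (((p + 2 : ℕ) : ℝ) - 1)) *
          (n : ℝ) ^ ((((p + 2 : ℕ) : ℝ) - 1) / ((p + 2 : ℕ) : ℝ)))) atTop (𝓝 1) := by
  obtain ⟨τ, hτ, moment_eq⟩ := hb.exists_tendsto_expMoment_eq 1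
  set ℓ : ℝ := ((p + 2 : ℕ) : ℝ) with hℓ
  set K : ℝ := (p + 1).factorial * c
  have K_pos : 0 < K := hb.limit_pos 1
  have denom_pos : 0 < ℓ * (ℓ - 1) := by
    have : 1 < ℓ := Nat.one_lt_cast.2 (by lia)
    nlinarith
  have variance : Tendsto (fun n => (normalizedVariance b (τ n)).re) atTop
      (𝓝 (1 / (ℓ * (ℓ - 1)))) := by
    have limit_eq : 1 / (((p : ℝ) + 2) * (p + 1)) = 1 / (ℓ * (ℓ - 1)) := by
      rw [hℓ]
      push_cast
      ring
    exact limit_eq ▸ hb.tendsto_re_normalizedVariance.comp hτ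
  have saddle : Tendsto (fun n : ℕ => (n * τ n ^ (p + 2)) ^ (1 / ℓ)) atTop (𝓝 (K ^ (1 / ℓ))) :=
    (hb.tendsto_natCast_mul_pow hτ moment_eq).rpow_const (Or.inl K_pos.ne')
  have product := (variance.mul saddle).div_const (1 / (ℓ * (ℓ - 1)) * K ^ (1 / ℓ))
  rw [div_self (by positivity)] at product
  refine product.congr' ?_
  filter_upwards [moment_eq, hτ.eventually hb.eventually_componentVariance_eq,
    hτ.eventually self_mem_nhdsWithin, eventually_gt_atTop 0]
    with n moment_eq variance_eq (τ_pos : 0 < τ n) n_pos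
  have n_pos : (0 : ℝ) < n := Nat.cast_pos.2 n_pos
  rw [variance_eq n moment_eq,
    ← rpow_inv_mul_rpow_sub_one_div n_pos τ_pos.le (m := p + 2) (by lia), ← hℓ]
  have := Real.rpow_pos_of_pos n_pos ((ℓ - 1) / ℓ)
  field_simp

/-! ### The weights of the sublattice count -/

theorem expMoment_smul (x : ℝ) (b : ℕ → ℝ) (j : ℕ) (t : ℝ) :
    expMoment (x • b) j t = x * expMoment b j t := by
  simp only [expMoment, Pi.smul_apply, smul_eq_mul, mul_assoc, tsum_mul_left]

theorem SaddleAdmissible.const_smul {b : ℕ → ℝ} {p : ℕ} {c : ℝ} (hb : SaddleAdmissible b p c)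
    {x : ℝ} (hx : 0 < x) : SaddleAdmissible (x • b) p (x * c) where
  nonneg k := mul_nonneg hx.le (hb.nonneg k)
  map_zero := by simp [hb.map_zero]
  const_pos := mul_pos hx hb.const_pos
  summable j t ht := by
    simpa only [Pi.smul_apply, smul_eq_mul, mul_assoc] using (hb.summable j ht).mul_left x
  tendsto_expMoment j := by
    simpa only [expMoment_smul, mul_left_comm] using (hb.tendsto_expMoment j).const_mul x
  exists_mul_pow_le := by
    obtain ⟨a, ha, lower⟩ := hb.exists_mul_pow_le
    refine ⟨x * a, mul_pos hx ha, fun k hk => ?_⟩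
    rw [mul_assoc]
    exact mul_le_mul_of_nonneg_left (lower k hk) hx.le

theorem saddleAdmissible_convolution {f : ArithmeticFunction ℝ} {p : ℕ} {Z : ℝ}
    (hf : ∀ n, 0 ≤ f n) (hf1 : 0 < f 1)
    (hsum : HasSum (fun d : ℕ+ => f d * (1 / (d : ℝ) ^ (p + 2))) Z) :
    SaddleAdmissible (fun n => (f * (ArithmeticFunction.pow (p + 1) :)) n / n) p Z where
  nonneg k := by
    rw [ArithmeticFunction.mul_apply]
    exact div_nonneg (Finset.sum_nonneg fun d _ => mul_nonneg (hf _) (Nat.cast_nonneg _))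
      k.cast_nonneg
  map_zero := by simp
  const_pos := hsum.tsum_eq ▸ hsum.summable.tsum_pos
    (fun d => mul_nonneg (hf d) (by positivity)) 1 (by simpa using hf1)
  summable j _ ht := (hasSum_convolution_moment j hf hsum.summable ht).summable
  tendsto_expMoment j := tendsto_pow_mul_expMoment_convolution j hf hsum
  exists_mul_pow_le := by
    refine ⟨f 1, hf1, fun k hk => ?_⟩
    have mem : (1, k) ∈ k.divisorsAntidiagonal := by simp [hk]
    rw [le_div_iff₀ (by positivity), ArithmeticFunction.mul_apply]
    refine le_trans (le_of_eq ?_) (Finset.single_le_sum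
      (fun d _ => mul_nonneg (hf d.1) (Nat.cast_nonneg _)) mem)
    simp [pow_succ, mul_assoc]

theorem saddleAdmissible_orbitWeight (p : ℕ) :
    SaddleAdmissible (orbitWeight (IntLattice (p + 2))) p
      (∏ i ∈ Finset.range (p + 1), zetaR ((i + 2 : ℕ) : ℝ)) := by
  have weight_eq : orbitWeight (IntLattice (p + 2)) = fun n : ℕ =>
      ((latticeCount (p + 1) : ArithmeticFunction ℝ) * (ArithmeticFunction.pow (p + 1) :)) n /
        n := by
    funext n
    obtain rfl | hn := eq_or_ne n 0
    · simp [orbitWeight]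
    · rw [orbitWeight, ← latticeCount_apply _ hn, latticeCount_succ_eq_mul_pow,
        ← ArithmeticFunction.natCoe_mul, ArithmeticFunction.natCoe_apply]
  have count_one : 1 ≤ latticeCount (p + 1) 1 := by
    simpa using pow_le_latticeCount_succ p one_ne_zero
  rw [weight_eq]
  refine saddleAdmissible_convolution (fun n => Nat.cast_nonneg _) (Nat.cast_pos.2 count_one) ?_
  simpa using hasSum_latticeCount_div_pow (p + 1) 0

end

/-- `Var(K_{ℓ,n}) ~ ((x K_ℓ)^{1/ℓ}/(ℓ(ℓ-1))) n^{(ℓ-1)/ℓ}` as `n → ∞`. -/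
theorem var_asymptotic (ℓ : ℕ) (hℓ : 2 ≤ ℓ) (x : ℝ) (hx : 0 < x) :
    Tendsto (fun n : ℕ =>
        varK ℓ n x /
          ((x * Kconst ℓ) ^ ((1 : ℝ) / (ℓ : ℝ)) / ((ℓ : ℝ) * ((ℓ : ℝ) - 1)) *
            (n : ℝ) ^ (((ℓ : ℝ) - 1) / (ℓ : ℝ))))
      atTop (nhds 1) := by
  obtain ⟨p, rfl⟩ := Nat.exists_eq_add_of_le' hℓ
  simp only [varK_eq_componentVariance, Kconst_add_two, mul_left_comm x]
  exact ((saddleAdmissible_orbitWeight p).const_smul hx).tendsto_componentVariance_div
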